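/- arXiv:math/0606100 — 3 statements merged into one kernel-verified Lean document; each statement's English description precedes it below -/
import Mathlib

section
/- For every d ≥ 3, the Fermat surface (x^d − y^d) − (z^d − t^d) = 0 in ℙ³ is smooth and contains exactly 3d² lines. -/
/-!
Smoothness holds because the `i`-th partial derivative is `± d xᵢ ^ (d - 1)`.

A line on the surface is found from each way of splitting the four coordinates into two pairs
`{p, q}`, `{r, s}` by imposing `x_p = a x_q` and `x_r = b x_s`; the form vanishes there exactly when
`a ^ d` and `b ^ d` equal a fixed sign, `1` for two of the splittings and `-1` for the third.
This gives `3 d²` lines, pairwise distinct since the support of the point with `x_q = 1`, `x_s = 0`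
recovers the splitting and its coordinates recover `a` (similarly for `b`).

Conversely, let `∑ cᵢ xᵢ ^ d` vanish on a subspace `W`. Polarizing three times (`polarize`) gives
`∑ cᵢ pᵢ qᵢ rᵢ wᵢ ^ (d - 3) = 0` for all `p q r w ∈ W`; this is where `d ≥ 3` is used. If some
coordinate `xᵢ` were not a multiple on `W` of any other `xⱼ`, there would be points of `W` with
`xⱼ = 0 ≠ xᵢ` for each of the three `j ≠ i`, and substituting them for `p, q, r` would leave one
nonzero term. So every coordinate is on `W` a multiple of another one (`exists_coordDependsOn`).
Choosing such a `j` for each `i` gives a self-map of four points without fixed points: either it pairs off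
the four points, or all of them lead to a single `j` (`fixedPointFree_fin_four`). In the latter
case `W` has dimension at most `1`; in the former `W` lies in, hence equals, one of the lines above.
-/


open MvPolynomial

/-- A line in ℙ³: a 2-dimensional linear subspace of ℂ⁴. -/
def IsLine (W : Submodule ℂ (Fin 4 → ℂ)) : Prop :=
  Module.finrank ℂ W = 2

/-- The line `W` lies on the surface `F = 0`. -/
def LiesOn (F : MvPolynomial (Fin 4) ℂ) (W : Submodule ℂ (Fin 4 → ℂ)) : Prop :=
  ∀ v ∈ W, eval v F = 0

/-- The surface `F = 0` is smooth: no nonzero point where all partials vanish. -/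
def SmoothSurface (F : MvPolynomial (Fin 4) ℂ) : Prop :=
  ∀ v : Fin 4 → ℂ, v ≠ 0 → ∃ i : Fin 4, eval v (pderiv i F) ≠ 0

/-- The Fermat-type polynomial `(x^d - y^d) - (z^d - t^d)`. -/
noncomputable def fermat (d : ℕ) : MvPolynomial (Fin 4) ℂ :=
  (X 0 ^ d - X 1 ^ d) - (X 2 ^ d - X 3 ^ d)

/-! ### Smoothness -/

lemma eval_fermat (d : ℕ) (v : Fin 4 → ℂ) :
    eval v (fermat d) = (v 0 ^ d - v 1 ^ d) - (v 2 ^ d - v 3 ^ d) := by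
  simp [fermat]

lemma smooth_fermat (d : ℕ) (hd : 3 ≤ d) : SmoothSurface (fermat d) := by
  intro v hv
  obtain ⟨i, hi⟩ := Function.ne_iff.mp hv
  have hd0 : (d : ℂ) ≠ 0 := by
    rw [Nat.cast_ne_zero]; omega
  have hi' : v i ^ (d - 1) ≠ 0 := pow_ne_zero _ hi
  refine ⟨i, ?_⟩
  fin_cases i <;>
    simp [fermat, pderiv_X] <;>
    exact ⟨by omega, fun h => absurd h hi⟩

/-! ### Every coordinate is a multiple of another one on a linear subspace of the surface -/

/-- One polarization step: differentiate `∑ cᵢ (vᵢ + s pᵢ) ^ (n + 1) = 0` at `s = 0`. -/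
lemma polarize (W : Submodule ℂ (Fin 4 → ℂ)) (c : Fin 4 → ℂ) (n : ℕ)
    (h : ∀ v ∈ W, ∑ i, c i * v i ^ (n + 1) = 0) (p : Fin 4 → ℂ) (hp : p ∈ W) :
    ∀ v ∈ W, ∑ i, (c i * p i) * v i ^ n = 0 := by
  intro v hv
  have h1 : HasDerivAt (fun s : ℂ => ∑ i, c i * (v i + s * p i) ^ (n + 1))
      (∑ i, c i * ((n + 1 : ℕ) * (v i + 0 * p i) ^ n * (1 * p i))) 0 := by
    refine HasDerivAt.fun_sum fun i _ => ?_
    have h2 : HasDerivAt (fun s : ℂ => v i + s * p i) (1 * p i) 0 :=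
      ((hasDerivAt_id (0 : ℂ)).mul_const (p i)).const_add (v i)
    exact (h2.fun_pow (n + 1)).const_mul (c i)
  have h0 : (fun s : ℂ => ∑ i, c i * (v i + s * p i) ^ (n + 1)) = fun _ => 0 := by
    funext s
    exact h (v + s • p) (W.add_mem hv (W.smul_mem s hp))
  rw [h0] at h1
  have h3 := h1.unique (hasDerivAt_const (0 : ℂ) (0 : ℂ))
  have hn : ((n + 1 : ℕ) : ℂ) ≠ 0 := Nat.cast_ne_zero.mpr n.succ_ne_zero
  refine (mul_eq_zero.mp ?_).resolve_left hn
  rw [← h3, Finset.mul_sum]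
  refine Finset.sum_congr rfl fun i _ => ?_
  simp only [zero_mul, add_zero, one_mul]
  ring

/-- On `W` the `i`-th coordinate is a (possibly zero) multiple of the `j`-th one. -/
def CoordDependsOn (W : Submodule ℂ (Fin 4 → ℂ)) (i j : Fin 4) : Prop :=
  ∃ c : ℂ, ∀ w ∈ W, w i = c * w j

lemma CoordDependsOn.trans {W : Submodule ℂ (Fin 4 → ℂ)} {i j k : Fin 4}
    (h : CoordDependsOn W i j) (h' : CoordDependsOn W j k) : CoordDependsOn W i k := by
  obtain ⟨a, ha⟩ := h
  obtain ⟨b, hb⟩ := h'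
  exact ⟨a * b, fun w hw => by rw [ha w hw, hb w hw, mul_assoc]⟩

/-- If no point of `W` had `xⱼ = 0 ≠ xᵢ`, then `xᵢ` would factor through `xⱼ` on `W`. -/
lemma exists_of_not_coordDependsOn {W : Submodule ℂ (Fin 4 → ℂ)} {i j : Fin 4}
    (h : ¬ CoordDependsOn W i j) : ∃ p ∈ W, p j = 0 ∧ p i ≠ 0 := by
  by_contra! hc
  apply h
  by_cases hj : ∃ u ∈ W, u j ≠ 0
  · obtain ⟨u, hu, huj⟩ := hj
    refine ⟨u i / u j, fun w hw => ?_⟩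
    have := hc (w - (w j / u j) • u) (W.sub_mem hw (W.smul_mem _ hu)) (by simp [huj])
    simp only [Pi.sub_apply, Pi.smul_apply, smul_eq_mul] at this
    linear_combination this
  · push Not at hj
    exact ⟨0, fun w hw => by rw [hc w hw (hj w hw), zero_mul]⟩

lemma exists_coordDependsOn {W : Submodule ℂ (Fin 4 → ℂ)} {d : ℕ} (hd : 3 ≤ d)
    (h : LiesOn (fermat d) W) (i : Fin 4) : ∃ j, j ≠ i ∧ CoordDependsOn W i j := by
  by_contra! hc
  obtain ⟨n, rfl⟩ : ∃ n, d = n + 3 := ⟨d - 3, by omega⟩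
  have h0 : ∀ v ∈ W, ∑ k, (![1, -1, -1, 1] : Fin 4 → ℂ) k * v k ^ (n + 3) = 0 := by
    intro v hv
    have := h v hv
    rw [eval_fermat] at this
    simp only [Fin.sum_univ_four, Matrix.cons_val]
    linear_combination this
  have h3 : ∀ p ∈ W, ∀ q ∈ W, ∀ r ∈ W, ∀ v ∈ W,
      ∑ k, ((![1, -1, -1, 1] : Fin 4 → ℂ) k * p k * q k * r k) * v k ^ n = 0 :=
    fun p hp q hq r hr =>
      polarize W _ n (polarize W _ (n + 1) (polarize W _ (n + 2) h0 p hp) q hq) r hr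
  have key : ∀ j, ∃ p ∈ W, (j ≠ i → p j = 0) ∧ (j ≠ i → p i ≠ 0) := by
    intro j
    by_cases hj : j = i
    · exact ⟨0, W.zero_mem, by simp [hj], by simp [hj]⟩
    · obtain ⟨p, hp, hpj, hpi⟩ := exists_of_not_coordDependsOn (hc j hj)
      exact ⟨p, hp, fun _ => hpj, fun _ => hpi⟩
  choose p hp hpj hpi using key
  -- The three coordinates other than `i`, with the points of `W` attached to them.
  obtain ⟨j, k, l, hj, hk, hl, hall⟩ : ∃ j k l : Fin 4, j ≠ i ∧ k ≠ i ∧ l ≠ i ∧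
      ∀ m, m ≠ i → m = j ∨ m = k ∨ m = l := by
    clear hc hpj hpi
    revert i; decide
  have := h3 (p j) (hp j) (p k) (hp k) (p l) (hp l) (p j) (hp j)
  rw [Finset.sum_eq_single i] at this
  · have hci : (![1, -1, -1, 1] : Fin 4 → ℂ) i ≠ 0 := by fin_cases i <;> simp
    exact mul_ne_zero (mul_ne_zero (mul_ne_zero (mul_ne_zero hci (hpi j hj)) (hpi k hk))
      (hpi l hl)) (pow_ne_zero _ (hpi j hj)) this
  · intro m _ hm
    rcases hall m hm with rfl | rfl | rfl <;> simp [hpj _ hm]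
  · simp

set_option maxRecDepth 100000 in
/-- A self-map of four points without fixed points has either one cycle, which every point
reaches, or two cycles of length two. -/
lemma fixedPointFree_fin_four : ∀ f : Fin 4 → Fin 4, (∀ i, f i ≠ i) →
    (∃ j, ∀ i, i = j ∨ f i = j ∨ f (f i) = j ∨ f (f (f i)) = j) ∨
    (f 0 = 1 ∧ f 2 = 3) ∨ (f 0 = 2 ∧ f 1 = 3) ∨ (f 0 = 3 ∧ f 1 = 2) := by
  decide

lemma not_all_coordDependsOn {W : Submodule ℂ (Fin 4 → ℂ)} (hW : IsLine W) (j : Fin 4) :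
    ¬ ∀ i, CoordDependsOn W i j := by
  intro h
  choose c hc using h
  have hle : W ≤ Submodule.span ℂ {c} := by
    intro w hw
    rw [Submodule.mem_span_singleton]
    refine ⟨w j, ?_⟩
    funext i
    simp [hc i w hw, mul_comm]
  have h1 := Submodule.finrank_mono hle
  have h2 := finrank_span_le_card (R := ℂ) ({c} : Set (Fin 4 → ℂ))
  rw [IsLine] at hW
  simp at h2
  omega

lemma exists_pairing {W : Submodule ℂ (Fin 4 → ℂ)} {d : ℕ} (hd : 3 ≤ d) (hW : IsLine W)
    (h : LiesOn (fermat d) W) :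
    (CoordDependsOn W 0 1 ∧ CoordDependsOn W 2 3) ∨
      (CoordDependsOn W 0 2 ∧ CoordDependsOn W 1 3) ∨
      (CoordDependsOn W 0 3 ∧ CoordDependsOn W 1 2) := by
  choose f hf hS using exists_coordDependsOn hd h
  rcases fixedPointFree_fin_four f hf with ⟨j, hj⟩ | ⟨h1, h2⟩ | ⟨h1, h2⟩ | ⟨h1, h2⟩
  · refine absurd (fun i => ?_) (not_all_coordDependsOn hW j)
    rcases hj i with rfl | rfl | rfl | rfl
    · exact ⟨1, by simp⟩
    · exact hS i
    · exact (hS i).trans (hS _)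
    · exact ((hS i).trans (hS _)).trans (hS _)
  · exact Or.inl ⟨h1 ▸ hS 0, h2 ▸ hS 2⟩
  · exact Or.inr (Or.inl ⟨h1 ▸ hS 0, h2 ▸ hS 1⟩)
  · exact Or.inr (Or.inr ⟨h1 ▸ hS 0, h2 ▸ hS 1⟩)

/-! ### The explicit lines -/

/-- The three splittings of the four coordinates into two pairs: row `m` lists the first pair and
then the second pair. -/
def splitting : Fin 3 → Fin 4 → Fin 4 :=
  ![![0, 1, 2, 3], ![0, 2, 1, 3], ![0, 3, 1, 2]]

/-- The subspace `x_p = a x_q`, `x_r = b x_s` for the splitting `{p, q}`, `{r, s}` of index `m`. -/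
def pairLine (m : Fin 3) (a b : ℂ) : Submodule ℂ (Fin 4 → ℂ) where
  carrier := {v | v (splitting m 0) = a * v (splitting m 1) ∧
    v (splitting m 2) = b * v (splitting m 3)}
  add_mem' := by
    rintro v w ⟨h1, h2⟩ ⟨h3, h4⟩
    exact ⟨by simp only [Pi.add_apply, h1, h3]; ring, by simp only [Pi.add_apply, h2, h4]; ring⟩
  zero_mem' := by simp
  smul_mem' := by
    rintro c v ⟨h1, h2⟩
    exact ⟨by simp only [Pi.smul_apply, smul_eq_mul, h1]; ring,
      by simp only [Pi.smul_apply, smul_eq_mul, h2]; ring⟩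

lemma mem_pairLine {m : Fin 3} {a b : ℂ} {v : Fin 4 → ℂ} :
    v ∈ pairLine m a b ↔ v (splitting m 0) = a * v (splitting m 1) ∧
      v (splitting m 2) = b * v (splitting m 3) := Iff.rfl

/-- The point of `pairLine m a b` whose two free coordinates, the second ones of each pair, are
`s` and `t`. -/
def pairPoint (m : Fin 3) (a b s t : ℂ) : Fin 4 → ℂ :=
  (![![a * s, s, b * t, t], ![a * s, b * t, s, t], ![a * s, b * t, t, s]] :
    Fin 3 → Fin 4 → ℂ) m

lemma pairPoint_mem (m : Fin 3) (a b s t : ℂ) : pairPoint m a b s t ∈ pairLine m a b := by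
  rw [mem_pairLine]
  fin_cases m <;> simp [pairPoint, splitting]

lemma isLine_pairLine (m : Fin 3) (a b : ℂ) : IsLine (pairLine m a b) := by
  let f : pairLine m a b →ₗ[ℂ] ℂ × ℂ :=
    ((LinearMap.proj (splitting m 1)).prod (LinearMap.proj (splitting m 3))).comp
      (pairLine m a b).subtype
  have hf : Function.Bijective f := by
    constructor
    · rintro ⟨v, hv⟩ ⟨w, hw⟩ h
      rw [mem_pairLine] at hv hw
      obtain ⟨h1, h3⟩ : v (splitting m 1) = w (splitting m 1) ∧
          v (splitting m 3) = w (splitting m 3) := Prod.mk.inj h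
      have h0 := hv.1.trans ((congrArg (a * ·) h1).trans hw.1.symm)
      have h2 := hv.2.trans ((congrArg (b * ·) h3).trans hw.2.symm)
      ext i
      fin_cases m <;> fin_cases i <;> assumption
    · rintro ⟨s, t⟩
      refine ⟨⟨pairPoint m a b s t, pairPoint_mem m a b s t⟩, ?_⟩
      refine Prod.ext ?_ ?_
      · change pairPoint m a b s t (splitting m 1) = s
        fin_cases m <;> rfl
      · change pairPoint m a b s t (splitting m 3) = t
        fin_cases m <;> rfl
  have := (LinearEquiv.ofBijective f hf).finrank_eq
  rw [IsLine, this]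
  simp

/-- The common value of `a ^ d` and `b ^ d` for the lines of the splitting of index `m`. -/
def pairSign : Fin 3 → ℂ := ![1, 1, -1]

lemma liesOn_pairLine_iff {d : ℕ} (hd : 3 ≤ d) (m : Fin 3) (a b : ℂ) :
    LiesOn (fermat d) (pairLine m a b) ↔ a ^ d = pairSign m ∧ b ^ d = pairSign m := by
  have hd0 : d ≠ 0 := by omega
  constructor
  · intro h
    have h1 := h _ (pairPoint_mem m a b 1 0)
    have h2 := h _ (pairPoint_mem m a b 0 1)
    rw [eval_fermat] at h1 h2
    fin_cases m <;> simp [pairPoint, pairSign, hd0] at h1 h2 ⊢ <;> constructor <;>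
      first
        | linear_combination h1
        | linear_combination -h2
  · rintro ⟨ha, hb⟩ v hv
    rw [mem_pairLine] at hv
    rw [eval_fermat]
    fin_cases m <;> simp [splitting, pairSign] at hv ha hb ⊢ <;>
      rw [hv.1, hv.2, mul_pow, mul_pow, ha, hb] <;> ring

/-- Points of the two lines are compared through the point of the first one with free coordinates
`1, 0`, whose support is the first pair because `a ≠ 0`, and the one with `0, 1`. -/
lemma pairLine_injective {m m' : Fin 3} {a b a' b' : ℂ} (ha : a ≠ 0)
    (h : pairLine m a b = pairLine m' a' b') : m = m' ∧ a = a' ∧ b = b' := by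
  have h1 := h ▸ pairPoint_mem m a b 1 0
  have h2 := h ▸ pairPoint_mem m a b 0 1
  rw [mem_pairLine] at h1 h2
  fin_cases m <;> fin_cases m' <;> simp [pairPoint, splitting] at h1 h2 ⊢ <;> simp_all

lemma exists_eq_pairLine {W : Submodule ℂ (Fin 4 → ℂ)} {d : ℕ} (hd : 3 ≤ d) (hW : IsLine W)
    (h : LiesOn (fermat d) W) : ∃ m a b, W = pairLine m a b := by
  have key : ∃ m a b, W ≤ pairLine m a b := by
    rcases exists_pairing hd hW h with h | h | h
    · obtain ⟨⟨a, ha⟩, ⟨b, hb⟩⟩ := h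
      exact ⟨0, a, b, fun w hw => ⟨ha w hw, hb w hw⟩⟩
    · obtain ⟨⟨a, ha⟩, ⟨b, hb⟩⟩ := h
      exact ⟨1, a, b, fun w hw => ⟨ha w hw, hb w hw⟩⟩
    · obtain ⟨⟨a, ha⟩, ⟨b, hb⟩⟩ := h
      exact ⟨2, a, b, fun w hw => ⟨ha w hw, hb w hw⟩⟩
  obtain ⟨m, a, b, hle⟩ := key
  exact ⟨m, a, b, Submodule.eq_of_le_of_finrank_eq hle (hW.trans (isLine_pairLine m a b).symm)⟩

/-! ### Counting -/

/-- For every `d ≥ 3`, the Fermat surface `(x^d - y^d) - (z^d - t^d) = 0` in ℙ³ is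
smooth and contains exactly `3d²` lines. -/
theorem fermat_surface_lines (d : ℕ) (hd : 3 ≤ d) :
    SmoothSurface (fermat d) ∧
    Nat.card {W : Submodule ℂ (Fin 4 → ℂ) // IsLine W ∧ LiesOn (fermat d) W} =
      3 * d ^ 2 := by
  refine ⟨smooth_fermat d hd, ?_⟩
  have hd0 : d ≠ 0 := by omega
  have : NeZero d := ⟨hd0⟩
  have hroot : ∀ m, ∃ θ : ℂ, θ ^ d = pairSign m := fun m =>
    IsAlgClosed.exists_pow_nat_eq _ (by omega)
  choose θ hθ using hroot
  have hsign : ∀ m, pairSign m ≠ 0 := by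
    intro m; fin_cases m <;> simp [pairSign]
  have hθ0 : ∀ m, θ m ≠ 0 := by
    intro m h0
    apply hsign m
    rw [← hθ m, h0, zero_pow hd0]
  have hpow : ∀ (m) (ζ : rootsOfUnity d ℂ), (θ m * ((ζ : ℂˣ) : ℂ)) ^ d = pairSign m := by
    intro m ζ
    rw [mul_pow, hθ, (mem_rootsOfUnity' d _).mp ζ.2, mul_one]
  -- The `d`-th roots of `pairSign m` are the products of `θ m` with the `d`-th roots of unity.
  let g : Fin 3 × rootsOfUnity d ℂ × rootsOfUnity d ℂ →
      {W : Submodule ℂ (Fin 4 → ℂ) // IsLine W ∧ LiesOn (fermat d) W} := fun x =>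
    ⟨pairLine x.1 (θ x.1 * ((x.2.1 : ℂˣ) : ℂ)) (θ x.1 * ((x.2.2 : ℂˣ) : ℂ)),
      isLine_pairLine _ _ _,
      (liesOn_pairLine_iff hd _ _ _).mpr ⟨hpow _ _, hpow _ _⟩⟩
  have hg : Function.Bijective g := by
    constructor
    · rintro ⟨m, ζ, ξ⟩ ⟨m', ζ', ξ'⟩ h
      obtain ⟨rfl, h1, h2⟩ :=
        pairLine_injective (mul_ne_zero (hθ0 m) (Units.ne_zero _)) (congrArg Subtype.val h)
      have e1 : ζ = ζ' := Subtype.ext (Units.ext (mul_left_cancel₀ (hθ0 m) h1))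
      have e2 : ξ = ξ' := Subtype.ext (Units.ext (mul_left_cancel₀ (hθ0 m) h2))
      rw [e1, e2]
    · rintro ⟨W, hW, hF⟩
      obtain ⟨m, a, b, rfl⟩ := exists_eq_pairLine hd hW hF
      obtain ⟨ha, hb⟩ := (liesOn_pairLine_iff hd m a b).mp hF
      have lift : ∀ a : ℂ, a ^ d = pairSign m →
          ∃ ζ : rootsOfUnity d ℂ, θ m * ((ζ : ℂˣ) : ℂ) = a := by
        intro a ha
        have h1 : (a / θ m) ^ d = 1 := by rw [div_pow, ha, hθ, div_self (hsign m)]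
        refine ⟨rootsOfUnity.mkOfPowEq (a / θ m) h1, ?_⟩
        rw [rootsOfUnity.coe_mkOfPowEq, mul_div_cancel₀ _ (hθ0 m)]
      obtain ⟨ζ, rfl⟩ := lift a ha
      obtain ⟨ξ, rfl⟩ := lift b hb
      exact ⟨(m, ζ, ξ), rfl⟩
  rw [← Nat.card_eq_of_bijective g hg, Nat.card_prod, Nat.card_prod, Complex.card_rootsOfUnity,
    Nat.card_eq_fintype_card, Fintype.card_fin, sq]
end

section
/- Let f ∈ ℂ[x,y,z] be homogeneous of degree d ≥ 2 defining a smooth plane curve C : f = 0, let S : t^d − f(x,y,z) = 0, and let π : S → ℙ² be the projection [x:y:z:t] ↦ [x:y:z]. For a line L in ℙ² (a 2-dimensional subspace of ℂ³), the preimage π⁻¹(L) contains a line of ℙ³ lying on S if and only if the restriction of f to L is the d-th power of a linear form on L; this holds exactly when L is the tangent line of C at a total inflection point, and in that case π⁻¹(L) consists of exactly d distinct lines lying on S. -/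
/-!
A line `W` on the surface `t ^ d = f(x, y, z)` cannot contain the centre of projection
`[0:0:0:1]`, so if it lies over `L` it projects isomorphically to `L`: it is the graph
`t = γ(x, y, z)` of a linear form `γ` on `L`, and lying on the surface means `f = γ ^ d` on `L`
(`eq_graphOver_of_line`). Conversely every such `γ` gives a line on the surface.

If `f = γ ^ d` on `L`, then at the zero `x` of `γ` on `L` the derivative of `f` in every direction
of `L` vanishes because `d ≥ 2`, so `L` is the tangent line at `x`, which is a total inflection
point. The other direction absorbs the nonzero scalar into the linear form by taking a `d`-th root.

For the count, smoothness implies that `f` does not vanish identically on `L`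
(`exists_mem_eval_ne_zero`): otherwise `∇f` is determined along `L` by one derivative transversal
to `L`, a binary form of degree `d - 1 ≥ 1`, which has a zero on `L`. Hence `γ` is nonzero on `L`,
and the linear forms on `L` with `d`-th power `γ ^ d` are the `d` distinct multiples `ζ γ` with
`ζ ^ d = 1`.
-/

open MvPolynomial

/-- The polynomial `t^d - f(x,y,z)` in four variables, `t` being the last variable. -/
noncomputable def coverPoly (d : ℕ) (f : MvPolynomial (Fin 3) ℂ) :
    MvPolynomial (Fin 4) ℂ :=
  X 3 ^ d - rename Fin.castSucc f

/-- The linear projection `ℂ⁴ → ℂ³`, `(x,y,z,t) ↦ (x,y,z)` (projection from `[0:0:0:1]`). -/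
noncomputable def proj3 : (Fin 4 → ℂ) →ₗ[ℂ] (Fin 3 → ℂ) :=
  LinearMap.funLeft ℂ ℂ (Fin.castSucc : Fin 3 → Fin 4)

/-- The tangent plane `T_x = {v ∈ ℂ³ : ∇f(x)·v = 0}` of the curve `f = 0` at `x`. -/
def tangentSet (f : MvPolynomial (Fin 3) ℂ) (x : Fin 3 → ℂ) : Set (Fin 3 → ℂ) :=
  {v | ∑ i : Fin 3, eval x (pderiv i f) * v i = 0}

/-- `x` is a total inflection point of the plane curve `f = 0` of degree `d`:
`x` is a nonzero point of the curve and the restriction of `f` to the tangent line at `x`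
equals, up to a nonzero scalar, the `d`-th power of a linear form. -/
def IsTotalInflection (d : ℕ) (f : MvPolynomial (Fin 3) ℂ) (x : Fin 3 → ℂ) : Prop :=
  x ≠ 0 ∧ eval x f = 0 ∧ ∃ c : ℂ, c ≠ 0 ∧ ∃ γ : (Fin 3 → ℂ) →ₗ[ℂ] ℂ,
    ∀ v ∈ tangentSet f x, eval v f = c * (γ v) ^ d

/-! ### Forms and their gradients -/

lemma eval_smul_of_isHomogeneous {σ : Type*} {n : ℕ} {p : MvPolynomial σ ℂ}
    (hp : p.IsHomogeneous n) (c : ℂ) (v : σ → ℂ) : eval (c • v) p = c ^ n * eval v p := by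
  rw [eval_eq, eval_eq, Finset.mul_sum]
  refine Finset.sum_congr rfl fun e he => ?_
  have h := hp (mem_support_iff.mp he)
  have h2 : ∑ i ∈ e.support, e i = n := by
    rw [← h, Finsupp.weight_apply]
    simp [Finsupp.sum]
  simp only [Pi.smul_apply, smul_eq_mul, mul_pow, Finset.prod_mul_distrib,
    Finset.prod_pow_eq_pow_sum, h2]
  ring

/-- The gradient of `f` at `x`, as the linear form `v ↦ ∇f(x)·v`. -/
noncomputable def gradForm (f : MvPolynomial (Fin 3) ℂ) (x : Fin 3 → ℂ) :
    (Fin 3 → ℂ) →ₗ[ℂ] ℂ :=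
  ∑ i : Fin 3, eval x (pderiv i f) • LinearMap.proj i

lemma gradForm_apply (f : MvPolynomial (Fin 3) ℂ) (x v : Fin 3 → ℂ) :
    gradForm f x v = ∑ i : Fin 3, eval x (pderiv i f) * v i := by
  simp [gradForm]

lemma tangentSet_eq_ker (f : MvPolynomial (Fin 3) ℂ) (x : Fin 3 → ℂ) :
    tangentSet f x = (LinearMap.ker (gradForm f x) : Set (Fin 3 → ℂ)) := by
  ext v
  simp [tangentSet, gradForm_apply]

lemma gradForm_ne_zero {f : MvPolynomial (Fin 3) ℂ} {x : Fin 3 → ℂ}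
    (h : ∃ i : Fin 3, eval x (pderiv i f) ≠ 0) : gradForm f x ≠ 0 := by
  obtain ⟨i, hi⟩ := h
  intro h0
  apply hi
  have := LinearMap.congr_fun h0 (Pi.single i 1)
  simpa [gradForm_apply, Pi.single_apply] using this

lemma hasDerivAt_eval_add_smul (f : MvPolynomial (Fin 3) ℂ) (x v : Fin 3 → ℂ) :
    HasDerivAt (fun s : ℂ => eval (x + s • v) f) (gradForm f x v) 0 := by
  rw [gradForm_apply]
  induction f using MvPolynomial.induction_on with
  | C a => simpa using hasDerivAt_const (0 : ℂ) a
  | add p q hp hq =>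
    have := hp.add hq
    simp only [map_add, add_mul, Finset.sum_add_distrib]
    exact this
  | mul_X p j hp =>
    have hj : HasDerivAt (fun s : ℂ => x j + s * v j) (v j) 0 := by
      simpa using ((hasDerivAt_id (0 : ℂ)).mul_const (v j)).const_add (x j)
    have := hp.mul hj
    have hfun : (fun s : ℂ => eval (x + s • v) (p * X j))
        = (fun s : ℂ => eval (x + s • v) p) * fun s : ℂ => x j + s * v j := by
      ext s
      simp
    have h : ∀ i, eval x (pderiv i (p * X j)) * v i
        = (eval x (pderiv i p) * v i) * x j + (if i = j then eval x p * v i else 0) := by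
      intro i
      by_cases hij : i = j
      · subst hij
        simp
        ring
      · simp [hij, pderiv_X_of_ne (Ne.symm hij)]
        ring
    rw [hfun]
    refine this.congr_deriv ?_
    simp only [h, Finset.sum_add_distrib, ← Finset.sum_mul]
    simp

/-- If `f` vanishes to order at least `2` at `x` along `v`, then `v` lies in the kernel of the
gradient. -/
lemma gradForm_eq_zero {f : MvPolynomial (Fin 3) ℂ} {x v : Fin 3 → ℂ} {d : ℕ} (hd : 2 ≤ d) (c : ℂ)
    (h : ∀ s : ℂ, eval (x + s • v) f = s ^ d * c) : gradForm f x v = 0 := by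
  have h1 := hasDerivAt_eval_add_smul f x v
  have h2 : HasDerivAt (fun s : ℂ => eval (x + s • v) f) 0 0 := by
    simp only [h]
    have := (hasDerivAt_pow d (0 : ℂ)).mul_const c
    have hd' : d - 1 ≠ 0 := by omega
    simpa [hd'] using this
  exact h1.unique h2

/-! ### Smoothness and lines in the plane -/

lemma polyEval_aeval {σ : Type*} (g : σ → Polynomial ℂ) (p : MvPolynomial σ ℂ) (s : ℂ) :
    (aeval g p).eval s = eval (fun i => (g i).eval s) p := by
  induction p using MvPolynomial.induction_on with
  | C a => simp
  | add p q hp hq => simp [hp, hq]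
  | mul_X p i hp => simp [hp]

/-- A form of positive degree, restricted to the span of two vectors, has a nontrivial zero as a
binary form in the coefficients. -/
lemma exists_zero_on_pencil {σ : Type*} {n : ℕ} (hn : n ≠ 0) {p : MvPolynomial σ ℂ}
    (hp : p.IsHomogeneous n) (a b : σ → ℂ) :
    ∃ s t : ℂ, (s ≠ 0 ∨ t ≠ 0) ∧ eval (s • a + t • b) p = 0 := by
  by_contra! hcon
  -- The restrictions of `p` to the affine lines `s • a + b` and `a + s • b`.
  let Q : Polynomial ℂ := aeval (fun i => Polynomial.C (a i) * Polynomial.X + Polynomial.C (b i)) p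
  let R : Polynomial ℂ := aeval (fun i => Polynomial.C (a i) + Polynomial.C (b i) * Polynomial.X) p
  have hQ : ∀ s, Q.eval s = eval (s • a + b) p := fun s =>
    (polyEval_aeval _ p s).trans <| congrArg (fun g => eval g p) <| funext fun i => by
      simp only [Polynomial.eval_add, Polynomial.eval_mul, Polynomial.eval_C, Polynomial.eval_X,
        Pi.add_apply, Pi.smul_apply, smul_eq_mul]
      ring
  have hR : ∀ s, R.eval s = eval (a + s • b) p := fun s =>
    (polyEval_aeval _ p s).trans <| congrArg (fun g => eval g p) <| funext fun i => by
      simp only [Polynomial.eval_add, Polynomial.eval_mul, Polynomial.eval_C, Polynomial.eval_X,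
        Pi.add_apply, Pi.smul_apply, smul_eq_mul]
      ring
  -- Without a zero `Q` is a constant `k`, and homogeneity gives `R = k s ^ n`, so `R 0 = 0`.
  have hdeg : Q.degree = 0 := by
    by_contra h
    obtain ⟨s, hs⟩ := IsAlgClosed.exists_root Q h
    apply hcon s 1 (Or.inr one_ne_zero)
    rw [one_smul, ← hQ]
    exact hs
  obtain ⟨k, hk⟩ : ∃ k, Q = Polynomial.C k := ⟨_, Polynomial.eq_C_of_degree_eq_zero hdeg⟩
  have hRk : Polynomial.X * R = Polynomial.X * (Polynomial.C k * Polynomial.X ^ n) := by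
    refine Polynomial.funext fun s => ?_
    by_cases hs : s = 0
    · simp [hs]
    · have h1 : a + s • b = s • (s⁻¹ • a + b) := by
        rw [smul_add, smul_smul, mul_inv_cancel₀ hs, one_smul]
      have h2 := hQ s⁻¹
      rw [hk, Polynomial.eval_C] at h2
      rw [Polynomial.eval_mul, hR, h1, eval_smul_of_isHomogeneous hp, ← h2]
      simp only [Polynomial.eval_mul, Polynomial.eval_X, Polynomial.eval_C, Polynomial.eval_pow]
      ring
  have hRk' := mul_left_cancel₀ Polynomial.X_ne_zero hRk
  apply hcon 1 0 (Or.inl one_ne_zero)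
  have := hR 0
  rw [hRk'] at this
  simpa [hn] using this.symm

/-- A smooth plane curve of degree at least `2` contains no line. -/
lemma exists_mem_eval_ne_zero {d : ℕ} (hd : 2 ≤ d)
    {f : MvPolynomial (Fin 3) ℂ} (hf : f.IsHomogeneous d)
    (hsm : ∀ x : Fin 3 → ℂ, x ≠ 0 → ∃ i : Fin 3, eval x (pderiv i f) ≠ 0)
    {L : Submodule ℂ (Fin 3 → ℂ)} (hL : Module.finrank ℂ L = 2) :
    ∃ v ∈ L, eval v f ≠ 0 := by
  by_contra! hcon
  obtain ⟨c, hc⟩ : ∃ c, c ∉ L := by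
    by_contra! h
    have : L = ⊤ := by
      ext v
      simp [h v]
    rw [this] at hL
    simp at hL
  let B := Module.finBasisOfFinrankEq ℂ L hL
  have hp : (∑ i : Fin 3, C (c i) * pderiv i f).IsHomogeneous (d - 1) := by
    refine IsHomogeneous.sum _ _ _ fun i _ => ?_
    simpa using (isHomogeneous_C (Fin 3) (c i)).mul (hf.pderiv (i := i))
  obtain ⟨s, t, hst, h0⟩ := exists_zero_on_pencil (by omega : d - 1 ≠ 0) hp
    (B 0 : Fin 3 → ℂ) (B 1 : Fin 3 → ℂ)
  set x : Fin 3 → ℂ := s • (B 0 : Fin 3 → ℂ) + t • (B 1 : Fin 3 → ℂ) with hx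
  have hxL : x ∈ L := L.add_mem (L.smul_mem _ (B 0).2) (L.smul_mem _ (B 1).2)
  have hx0 : x ≠ 0 := by
    intro h
    have h' : s • B 0 + t • B 1 = 0 := Subtype.ext h
    have hli := LinearIndependent.pair_iff.mp
      (show LinearIndependent ℂ ![B 0, B 1] by
        convert B.linearIndependent using 1
        ext i
        fin_cases i <;> rfl) s t h'
    rcases hst with h | h
    · exact h hli.1
    · exact h hli.2
  have hLker : L ≤ LinearMap.ker (gradForm f x) := fun v hv =>
    gradForm_eq_zero hd 0 fun s => by
      rw [hcon _ (L.add_mem hxL (L.smul_mem s hv)), mul_zero]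
  have hcker : c ∈ LinearMap.ker (gradForm f x) := by
    rw [LinearMap.mem_ker, gradForm_apply, ← h0]
    simp [mul_comm]
  have hlt : L < LinearMap.ker (gradForm f x) := lt_of_le_of_ne hLker fun h => hc (h ▸ hcker)
  have h1 := Submodule.finrank_lt_finrank_of_lt hlt
  have h2 : LinearMap.ker (gradForm f x) < ⊤ :=
    lt_top_iff_ne_top.mpr fun h => gradForm_ne_zero (hsm x hx0) (LinearMap.ker_eq_top.mp h)
  have h3 := Submodule.finrank_lt h2.ne
  simp only [Module.finrank_fin_fun] at h3
  omega

/-- If `f = γ ^ d` on `L`, then `L` is the tangent line at the zero of `γ` on `L`. -/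
lemma exists_totalInflection {d : ℕ} (hd : 2 ≤ d) {f : MvPolynomial (Fin 3) ℂ}
    (hsm : ∀ x : Fin 3 → ℂ, x ≠ 0 → ∃ i : Fin 3, eval x (pderiv i f) ≠ 0)
    {L : Submodule ℂ (Fin 3 → ℂ)} (hL : Module.finrank ℂ L = 2) {γ : (Fin 3 → ℂ) →ₗ[ℂ] ℂ}
    (hγ : ∀ v ∈ L, eval v f = (γ v) ^ d) :
    ∃ x : Fin 3 → ℂ, IsTotalInflection d f x ∧ (L : Set (Fin 3 → ℂ)) = tangentSet f x := by
  have hker : LinearMap.ker (γ.domRestrict L) ≠ ⊥ :=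
    LinearMap.ker_ne_bot_of_finrank_lt (by simp [hL])
  obtain ⟨x, hxk, hx0⟩ := Submodule.exists_mem_ne_zero_of_ne_bot hker
  have hγx : γ x = 0 := hxk
  have hx0' : (x : Fin 3 → ℂ) ≠ 0 := fun h => hx0 (Subtype.ext h)
  have hLker : L ≤ LinearMap.ker (gradForm f x) := fun v hv =>
    gradForm_eq_zero hd (γ v ^ d) fun s => by
      rw [hγ _ (L.add_mem x.2 (L.smul_mem s hv))]
      simp [hγx, mul_pow]
  have h2 : LinearMap.ker (gradForm f x) < ⊤ :=
    lt_top_iff_ne_top.mpr fun h => gradForm_ne_zero (hsm x hx0') (LinearMap.ker_eq_top.mp h)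
  have h3 := Submodule.finrank_lt h2.ne
  simp only [Module.finrank_fin_fun] at h3
  have heq : L = LinearMap.ker (gradForm f x) :=
    Submodule.eq_of_le_of_finrank_le hLker (by omega)
  have hset : (L : Set (Fin 3 → ℂ)) = tangentSet f x := by
    rw [tangentSet_eq_ker, ← heq]
  refine ⟨x, ⟨hx0', ?_, 1, one_ne_zero, γ, fun v hv => ?_⟩, hset⟩
  · rw [hγ _ x.2, hγx, zero_pow (by omega)]
  · rw [one_mul]
    exact hγ v (by rwa [← hset] at hv)

/-! ### Lines on the surface as graphs -/

lemma eval_coverPoly (d : ℕ) (f : MvPolynomial (Fin 3) ℂ) (w : Fin 4 → ℂ) :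
    eval w (coverPoly d f) = w 3 ^ d - eval (proj3 w) f := by
  simp only [coverPoly, map_sub, map_pow, eval_X, eval_rename]
  rfl

lemma ext_proj3 {w w' : Fin 4 → ℂ} (h : proj3 w = proj3 w') (h3 : w 3 = w' 3) : w = w' := by
  ext i
  refine Fin.lastCases h3 (fun j => ?_) i
  exact congrFun h j

/-- The linear map `v ↦ (v, γ v)` from `ℂ³` to `ℂ⁴`. -/
noncomputable def liftBy (γ : (Fin 3 → ℂ) →ₗ[ℂ] ℂ) : (Fin 3 → ℂ) →ₗ[ℂ] (Fin 4 → ℂ) where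
  toFun v := Fin.snoc (α := fun _ => ℂ) v (γ v)
  map_add' u v := by
    ext i
    refine Fin.lastCases ?_ (fun j => ?_) i <;>
      simp only [Fin.snoc_last, Fin.snoc_castSucc, Pi.add_apply, map_add]
  map_smul' c v := by
    ext i
    refine Fin.lastCases ?_ (fun j => ?_) i <;>
      simp only [Fin.snoc_last, Fin.snoc_castSucc, Pi.smul_apply, map_smul,
        RingHom.id_apply]

@[simp] lemma proj3_liftBy (γ : (Fin 3 → ℂ) →ₗ[ℂ] ℂ) (v : Fin 3 → ℂ) :
    proj3 (liftBy γ v) = v := by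
  ext j
  exact Fin.snoc_castSucc (α := fun _ => ℂ) _ _ j

@[simp] lemma liftBy_three (γ : (Fin 3 → ℂ) →ₗ[ℂ] ℂ) (v : Fin 3 → ℂ) :
    liftBy γ v 3 = γ v :=
  Fin.snoc_last (n := 3) (α := fun _ => ℂ) (γ v) v

/-- The graph `{(v, γ v) : v ∈ L}` of the linear form `γ` over `L`. -/
noncomputable def graphOver (L : Submodule ℂ (Fin 3 → ℂ)) (γ : (Fin 3 → ℂ) →ₗ[ℂ] ℂ) :
    Submodule ℂ (Fin 4 → ℂ) :=
  L.map (liftBy γ)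

lemma mem_graphOver {L : Submodule ℂ (Fin 3 → ℂ)} {γ : (Fin 3 → ℂ) →ₗ[ℂ] ℂ} {w : Fin 4 → ℂ} :
    w ∈ graphOver L γ ↔ proj3 w ∈ L ∧ w 3 = γ (proj3 w) := by
  constructor
  · rintro ⟨v, hv, rfl⟩
    simpa using hv
  · rintro ⟨h, h3⟩
    exact ⟨proj3 w, h, ext_proj3 (by simp) (by simp [h3])⟩

/-- `W` is a line of `ℙ³` lying on the surface `t ^ d = f` and projecting into `L`. -/
def IsLineOver (d : ℕ) (f : MvPolynomial (Fin 3) ℂ) (L : Submodule ℂ (Fin 3 → ℂ))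
    (W : Submodule ℂ (Fin 4 → ℂ)) : Prop :=
  Module.finrank ℂ W = 2 ∧ (∀ v ∈ W, eval v (coverPoly d f) = 0) ∧ W.map proj3 ≤ L

lemma isLineOver_graphOver {d : ℕ} {f : MvPolynomial (Fin 3) ℂ}
    {L : Submodule ℂ (Fin 3 → ℂ)} (hL : Module.finrank ℂ L = 2) {γ : (Fin 3 → ℂ) →ₗ[ℂ] ℂ}
    (hγ : ∀ v ∈ L, eval v f = (γ v) ^ d) : IsLineOver d f L (graphOver L γ) := by
  refine ⟨?_, fun w hw => ?_, ?_⟩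
  · have hinj : Function.Injective (liftBy γ) := fun u v h => by
      simpa using congrArg proj3 h
    rw [← hL]
    exact (Submodule.equivMapOfInjective (liftBy γ) hinj L).finrank_eq.symm
  · rw [mem_graphOver] at hw
    rw [eval_coverPoly, hγ _ hw.1, hw.2, sub_self]
  · rintro _ ⟨w, hw, rfl⟩
    exact (mem_graphOver.mp hw).1

/-- Every line on the surface over `L` is the graph of a linear form whose `d`-th power is `f`:
it avoids the centre `[0:0:0:1]`, so it projects isomorphically onto `L`. -/
lemma eq_graphOver_of_line {d : ℕ} (hd : d ≠ 0) {f : MvPolynomial (Fin 3) ℂ}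
    (hf : f.IsHomogeneous d) {L : Submodule ℂ (Fin 3 → ℂ)} (hL : Module.finrank ℂ L = 2)
    {W : Submodule ℂ (Fin 4 → ℂ)} (hW : IsLineOver d f L W) :
    ∃ γ : (Fin 3 → ℂ) →ₗ[ℂ] ℂ, (∀ v ∈ L, eval v f = (γ v) ^ d) ∧ W = graphOver L γ := by
  obtain ⟨hW2, hWS, hWL⟩ := hW
  have hWL' : ∀ w ∈ W, proj3 w ∈ L := fun w hw => hWL ⟨w, hw, rfl⟩
  let q : W →ₗ[ℂ] L := proj3.restrict hWL'
  have hf0 : eval (0 : Fin 3 → ℂ) f = 0 := by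
    have := eval_smul_of_isHomogeneous hf 0 0
    simpa [hd] using this
  have hq : Function.Injective q := by
    rw [injective_iff_map_eq_zero]
    intro w hw
    have hw' : proj3 (w : Fin 4 → ℂ) = 0 := congrArg Subtype.val hw
    have h := hWS w w.2
    rw [eval_coverPoly, hw', hf0, sub_zero] at h
    refine Subtype.ext (ext_proj3 (by simpa using hw') ?_)
    simpa using pow_eq_zero_iff hd |>.mp h
  let e : W ≃ₗ[ℂ] L := LinearEquiv.ofInjectiveOfFinrankEq q hq (by rw [hW2, hL])
  have he : ∀ w : W, ((e w : L) : Fin 3 → ℂ) = proj3 w := fun w => rfl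
  have he' : ∀ v : L, proj3 (e.symm v : Fin 4 → ℂ) = v := fun v => by
    rw [← he, e.apply_symm_apply]
  obtain ⟨γ, hγ⟩ := LinearMap.exists_extend
    ((LinearMap.proj (3 : Fin 4) : (Fin 4 → ℂ) →ₗ[ℂ] ℂ) ∘ₗ W.subtype ∘ₗ e.symm.toLinearMap)
  have hγ' : ∀ v : L, γ v = (e.symm v : Fin 4 → ℂ) 3 := fun v => LinearMap.congr_fun hγ v
  refine ⟨γ, fun v hv => ?_, ?_⟩
  · have h := hWS _ (e.symm ⟨v, hv⟩).2
    rw [eval_coverPoly, he', ← hγ', sub_eq_zero] at h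
    exact h.symm
  · ext w
    rw [mem_graphOver]
    constructor
    · intro hw
      refine ⟨hWL' w hw, ?_⟩
      have := hγ' (e ⟨w, hw⟩)
      rw [e.symm_apply_apply] at this
      exact this.symm
    · rintro ⟨h1, h2⟩
      have : w = (e.symm ⟨proj3 w, h1⟩ : Fin 4 → ℂ) :=
        ext_proj3 (he' ⟨proj3 w, h1⟩).symm (by rw [← hγ' ⟨proj3 w, h1⟩, h2])
      rw [this]
      exact Subtype.mem _

/-- Two linear forms on `L` with the same `d`-th power differ by a `d`-th root of unity. -/
lemma exists_rootOfUnity {d : ℕ} (hd : d ≠ 0) {L : Submodule ℂ (Fin 3 → ℂ)}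
    {γ γ' : (Fin 3 → ℂ) →ₗ[ℂ] ℂ} (h : ∀ v ∈ L, γ' v ^ d = γ v ^ d)
    {v₀ : Fin 3 → ℂ} (hv₀ : v₀ ∈ L) (hne : γ v₀ ≠ 0) :
    ∃ ζ : ℂ, ζ ^ d = 1 ∧ ∀ v ∈ L, γ' v = ζ * γ v := by
  refine ⟨γ' v₀ / γ v₀, ?_, fun v hv => ?_⟩
  · rw [div_pow, h v₀ hv₀, div_self (pow_ne_zero _ hne)]
  · -- `γ'` vanishes on the zero of `γ` in `L`, in particular on `v - (γ v / γ v₀) v₀`.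
    have hu := h _ (L.sub_mem hv (L.smul_mem (γ v / γ v₀) hv₀))
    have h0 : γ (v - (γ v / γ v₀) • v₀) = 0 := by
      simp [hne]
    rw [h0, zero_pow hd, pow_eq_zero_iff hd, map_sub, map_smul, smul_eq_mul, sub_eq_zero] at hu
    rw [hu]
    ring

lemma card_isLineOver {d : ℕ} (hd : 2 ≤ d) {f : MvPolynomial (Fin 3) ℂ} (hf : f.IsHomogeneous d)
    (hsm : ∀ x : Fin 3 → ℂ, x ≠ 0 → ∃ i : Fin 3, eval x (pderiv i f) ≠ 0)
    {L : Submodule ℂ (Fin 3 → ℂ)} (hL : Module.finrank ℂ L = 2) {γ : (Fin 3 → ℂ) →ₗ[ℂ] ℂ}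
    (hγ : ∀ v ∈ L, eval v f = (γ v) ^ d) :
    Nat.card {W : Submodule ℂ (Fin 4 → ℂ) // IsLineOver d f L W} = d := by
  have hd0 : d ≠ 0 := by omega
  have : NeZero d := ⟨hd0⟩
  obtain ⟨v₀, hv₀, hne⟩ := exists_mem_eval_ne_zero hd hf hsm hL
  have hne' : γ v₀ ≠ 0 := by
    intro h
    rw [hγ v₀ hv₀, h, zero_pow hd0] at hne
    exact hne rfl
  have hroot : ∀ ζ : rootsOfUnity d ℂ, ((ζ : ℂˣ) : ℂ) ^ d = 1 := fun ζ =>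
    (mem_rootsOfUnity' d _).mp ζ.2
  let F : rootsOfUnity d ℂ → {W : Submodule ℂ (Fin 4 → ℂ) // IsLineOver d f L W} := fun ζ =>
    ⟨graphOver L (((ζ : ℂˣ) : ℂ) • γ), isLineOver_graphOver hL fun v hv => by
      rw [LinearMap.smul_apply, smul_eq_mul, mul_pow, hroot, one_mul, hγ v hv]⟩
  have hF : Function.Bijective F := by
    constructor
    · intro ζ ζ' h
      have hgr : graphOver L (((ζ : ℂˣ) : ℂ) • γ) = graphOver L (((ζ' : ℂˣ) : ℂ) • γ) :=
        congrArg Subtype.val h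
      have hmem : liftBy (((ζ : ℂˣ) : ℂ) • γ) v₀ ∈ graphOver L (((ζ : ℂˣ) : ℂ) • γ) :=
        ⟨v₀, hv₀, rfl⟩
      rw [hgr, mem_graphOver] at hmem
      have h2 := hmem.2
      simp only [liftBy_three, proj3_liftBy, LinearMap.smul_apply, smul_eq_mul] at h2
      exact Subtype.ext (Units.ext (mul_right_cancel₀ hne' h2))
    · rintro ⟨W, hW⟩
      obtain ⟨γ', hγ', rfl⟩ := eq_graphOver_of_line hd0 hf hL hW
      obtain ⟨ζ, hζ, hζγ⟩ := exists_rootOfUnity (γ := γ) (γ' := γ') hd0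
        (fun v hv => by rw [← hγ v hv, ← hγ' v hv]) hv₀ hne'
      refine ⟨rootsOfUnity.mkOfPowEq ζ hζ, Subtype.ext ?_⟩
      ext w
      simp only [F, mem_graphOver, rootsOfUnity.val_mkOfPowEq_coe, LinearMap.smul_apply,
        smul_eq_mul]
      exact and_congr_right fun hw => by rw [hζγ _ hw]
  rw [← Nat.card_eq_of_bijective F hF, Complex.card_rootsOfUnity]

/-- The lines over `L` cover the whole preimage of `L` in the surface. -/
lemma exists_line_through {d : ℕ} (hd : d ≠ 0) {f : MvPolynomial (Fin 3) ℂ}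
    {L : Submodule ℂ (Fin 3 → ℂ)} (hL : Module.finrank ℂ L = 2) {γ : (Fin 3 → ℂ) →ₗ[ℂ] ℂ}
    (hγ : ∀ v ∈ L, eval v f = (γ v) ^ d) {w : Fin 4 → ℂ}
    (hw : eval w (coverPoly d f) = 0) (hwL : proj3 w ∈ L) :
    ∃ W : Submodule ℂ (Fin 4 → ℂ), IsLineOver d f L W ∧ w ∈ W := by
  rw [eval_coverPoly, hγ _ hwL, sub_eq_zero] at hw
  obtain ⟨ζ, hζ, hwζ⟩ : ∃ ζ : ℂ, ζ ^ d = 1 ∧ w 3 = ζ * γ (proj3 w) := by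
    by_cases h0 : γ (proj3 w) = 0
    · rw [h0, zero_pow hd, pow_eq_zero_iff hd] at hw
      exact ⟨1, one_pow d, by rw [hw, h0, mul_zero]⟩
    · exact ⟨w 3 / γ (proj3 w), by rw [div_pow, hw, div_self (pow_ne_zero _ h0)],
        (div_mul_cancel₀ _ h0).symm⟩
  refine ⟨graphOver L (ζ • γ), isLineOver_graphOver hL fun v hv => ?_, ?_⟩
  · rw [LinearMap.smul_apply, smul_eq_mul, mul_pow, hζ, one_mul, hγ v hv]
  · exact mem_graphOver.mpr ⟨hwL, hwζ⟩

/-- For a smooth plane curve `C : f = 0` of degree `d ≥ 2` and a line `L ⊆ ℙ²`, the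
preimage of `L` under the projection `π : S → ℙ²` from the surface `S : t^d = f(x,y,z)`
contains a line of ℙ³ lying on `S` iff `f` restricted to `L` is the `d`-th power of a
linear form; this happens exactly when `L` is the tangent line of `C` at a total
inflection point, in which case `π⁻¹(L)` consists of exactly `d` distinct lines on `S`. -/
theorem lines_in_preimage_of_line (d : ℕ) (hd : 2 ≤ d)
    (f : MvPolynomial (Fin 3) ℂ) (hf : f.IsHomogeneous d)
    (hsm : ∀ x : Fin 3 → ℂ, x ≠ 0 → ∃ i : Fin 3, eval x (pderiv i f) ≠ 0)
    (L : Submodule ℂ (Fin 3 → ℂ)) (hL : Module.finrank ℂ L = 2) :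
    ((∃ W : Submodule ℂ (Fin 4 → ℂ), Module.finrank ℂ W = 2 ∧
        (∀ v ∈ W, eval v (coverPoly d f) = 0) ∧ W.map proj3 ≤ L) ↔
      (∃ γ : (Fin 3 → ℂ) →ₗ[ℂ] ℂ, ∀ v ∈ L, eval v f = (γ v) ^ d)) ∧
    ((∃ γ : (Fin 3 → ℂ) →ₗ[ℂ] ℂ, ∀ v ∈ L, eval v f = (γ v) ^ d) ↔
      (∃ x : Fin 3 → ℂ, IsTotalInflection d f x ∧ (L : Set (Fin 3 → ℂ)) = tangentSet f x)) ∧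
    ((∃ x : Fin 3 → ℂ, IsTotalInflection d f x ∧ (L : Set (Fin 3 → ℂ)) = tangentSet f x) →
      Nat.card {W : Submodule ℂ (Fin 4 → ℂ) // Module.finrank ℂ W = 2 ∧
        (∀ v ∈ W, eval v (coverPoly d f) = 0) ∧ W.map proj3 ≤ L} = d ∧
      ∀ v : Fin 4 → ℂ, eval v (coverPoly d f) = 0 → proj3 v ∈ L →
        ∃ W : Submodule ℂ (Fin 4 → ℂ), Module.finrank ℂ W = 2 ∧
          (∀ u ∈ W, eval u (coverPoly d f) = 0) ∧ W.map proj3 ≤ L ∧ v ∈ W) := by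
  have hd0 : d ≠ 0 := by omega
  have hback : (∃ x : Fin 3 → ℂ, IsTotalInflection d f x ∧
      (L : Set (Fin 3 → ℂ)) = tangentSet f x) →
      ∃ γ : (Fin 3 → ℂ) →ₗ[ℂ] ℂ, ∀ v ∈ L, eval v f = (γ v) ^ d := by
    rintro ⟨x, ⟨-, -, c, -, γ, hγ⟩, hLx⟩
    obtain ⟨r, hr⟩ := IsAlgClosed.exists_pow_nat_eq c (Nat.pos_of_ne_zero hd0)
    refine ⟨r • γ, fun v hv => ?_⟩
    rw [hγ v (hLx ▸ hv), LinearMap.smul_apply, smul_eq_mul, mul_pow, hr]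
  refine ⟨⟨?_, ?_⟩, ⟨?_, hback⟩, fun hx => ?_⟩
  · rintro ⟨W, hW⟩
    obtain ⟨γ, hγ, -⟩ := eq_graphOver_of_line hd0 hf hL hW
    exact ⟨γ, hγ⟩
  · rintro ⟨γ, hγ⟩
    exact ⟨graphOver L γ, isLineOver_graphOver hL hγ⟩
  · rintro ⟨γ, hγ⟩
    exact exists_totalInflection hd hsm hL hγ
  · obtain ⟨γ, hγ⟩ := hback hx
    refine ⟨card_isLineOver hd hf hsm hL hγ, fun w hw hwL => ?_⟩
    obtain ⟨W, ⟨h1, h2, h3⟩, h4⟩ := exists_line_through hd0 hL hγ hw hwL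
    exact ⟨W, h1, h2, h3, h4⟩
end

section
/- Let f ∈ ℂ[x,y,z] be homogeneous of degree d ≥ 2 defining a smooth plane curve C : f = 0, and let β be the number of total inflection points of C. Then the surface S : t^d − f(x,y,z) = 0 in ℙ³ contains exactly β·d lines. In particular, S contains at most 3d² lines. -/
/-!
A line `W` on `t ^ d = f(x, y, z)` meets the plane `t = 0` in a point `(x, 0)`, and its projection
from `(0 : 0 : 0 : 1)` is a line of `ℙ²` through `x` on which `f` is a constant times a `d`-th
power of a linear form vanishing at `x`. The constant is nonzero because a smooth curve contains no
line (`no_line`), so `x` is a total inflection point and the plane line is its tangent. Conversely,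
if `x`, `w` span the tangent at a total inflection point, then `f(α x + β w) = β ^ d f(w)`, and the
lines of the surface over this tangent are spanned by `(x, 0)` and `(w, τ)`, one for each of the `d`
solutions of `τ ^ d = f(w)`. This gives the count `card_lines_eq`.

For the bound, let `d ≥ 3` first. At a total inflection point one can write
`f = c U ^ d + Λ g` with `Λ = 0` the tangent and `g` nonzero at the point, and modulo `f` the
Hessian is `U ^ (d - 2)` up to factors that do not vanish at the point (`FlexData.exists_localForm`). So the
Hessian, a form of degree `3 (d - 2)`, meets the curve there with multiplicity at least `d - 2`, and
Bézout's theorem leaves room for at most `3 d` such points. Intersection numbers are replaced by the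
norm (a resultant) of the Hessian from the curve to the affine `s`-line, in a chart
`(s, z) ↦ a + s b + z q` in which `f` is monic in `z` and the inflection points have distinct
coordinates `s` (`exists_good_chart`). The norm is divisible by `(X - s) ^ (d - 2)` for each of them
(`FlexData.pow_dvd_resultant`), and its growth shows that its degree is at most `3 (d - 2) d`
(`natDegree_resultant_le`). It must also be nonzero. Irreducibility of a smooth curve is not
needed for this: common components of the curve and its Hessian are split off beforehand
(`exists_split`), and they contain no total inflection point (`FlexData.evalEval_ne_zero`).

If `d = 2`, every point of the conic is a total inflection point. Both sets are then infinite and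
have `Nat.card` equal to `0`, which makes both claims hold by convention.
-/

open MvPolynomial

/-- The number of total inflection points (as points of ℙ², i.e. 1-dimensional
subspaces of ℂ³) of the plane curve `f = 0`. -/
noncomputable def numTotalInflections (d : ℕ) (f : MvPolynomial (Fin 3) ℂ) : ℕ :=
  Nat.card {ℓ : Submodule ℂ (Fin 3 → ℂ) //
    Module.finrank ℂ ℓ = 1 ∧ ∃ x ∈ ℓ, IsTotalInflection d f x}

/-! ### Restriction to lines and total inflection points -/

/-- A form of degree `n` restricted to the line `A + B X` has degree at most `n` in `X`, and the
coefficient of `X ^ n` is its value at `B`. Coefficients in a general ring `R` allow `A` and `B` to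
depend on a further variable. -/
theorem aeval_line_natDegree_coeff {R : Type*} [CommRing R] [Algebra ℂ R]
    {f : MvPolynomial (Fin 3) ℂ} {n : ℕ} (hf : f.IsHomogeneous n) (A B : Fin 3 → R) :
    (aeval (fun i => Polynomial.C (A i) + Polynomial.C (B i) * Polynomial.X) f :
      Polynomial R).natDegree ≤ n ∧
    (aeval (fun i => Polynomial.C (A i) + Polynomial.C (B i) * Polynomial.X) f :
      Polynomial R).coeff n = aeval B f := by
  have hl : ∀ i, (Polynomial.C (A i) + Polynomial.C (B i) * Polynomial.X).natDegree ≤ 1 := by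
    intro i; compute_degree
  have hp : ∀ i (m : ℕ),
      ((Polynomial.C (A i) + Polynomial.C (B i) * Polynomial.X) ^ m).natDegree ≤ m := by
    intro i m
    simpa using Polynomial.natDegree_pow_le_of_le m (hl i)
  have hc : ∀ i (m : ℕ),
      ((Polynomial.C (A i) + Polynomial.C (B i) * Polynomial.X) ^ m).coeff m = B i ^ m := by
    intro i m
    have := Polynomial.coeff_pow_of_natDegree_le (m := m) (hl i)
    simpa using this
  have hdeg : ∀ m ∈ f.support, m 0 + m 1 + m 2 = n := by
    intro m hm
    have := hf (mem_support_iff.mp hm)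
    simpa [Finsupp.weight_apply, Finsupp.sum_fintype, Fin.sum_univ_three] using this
  rw [aeval_def, aeval_def, eval₂_eq', eval₂_eq']
  constructor
  · refine Polynomial.natDegree_sum_le_of_forall_le _ _ fun m hm => ?_
    rw [Fin.prod_univ_three]
    refine (Polynomial.natDegree_mul_le_of_le (m := 0) (n := n) ?_ ?_).trans (by simp)
    · rw [Polynomial.algebraMap_apply]; simp
    · rw [← hdeg m hm]
      exact Polynomial.natDegree_mul_le_of_le
        (Polynomial.natDegree_mul_le_of_le (hp _ _) (hp _ _)) (hp _ _)
  · rw [Polynomial.finsetSum_coeff]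
    refine Finset.sum_congr rfl fun m hm => ?_
    rw [Fin.prod_univ_three, Fin.prod_univ_three, Polynomial.algebraMap_apply,
      Polynomial.coeff_C_mul, ← hdeg m hm,
      Polynomial.coeff_mul_add_eq_of_natDegree_le
        (Polynomial.natDegree_mul_le_of_le (hp _ _) (hp _ _)) (hp _ _),
      Polynomial.coeff_mul_add_eq_of_natDegree_le (hp _ _) (hp _ _), hc, hc, hc]

/-- The restriction of a ternary polynomial to the affine line `t ↦ x + t v`, as a univariate
polynomial in `t`. -/
noncomputable def lineRes (x v : Fin 3 → ℂ) : MvPolynomial (Fin 3) ℂ →ₐ[ℂ] Polynomial ℂ :=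
  aeval fun i => Polynomial.C (x i) + Polynomial.C (v i) * Polynomial.X

theorem eval_lineRes (x v : Fin 3 → ℂ) (f : MvPolynomial (Fin 3) ℂ) (t : ℂ) :
    (lineRes x v f).eval t = eval (x + t • v) f := by
  unfold lineRes
  induction f using MvPolynomial.induction_on with
  | C a => simp
  | add p q hp hq => simp [hp, hq]
  | mul_X p i hp => simp [hp, mul_comm t]

/-- The differential of `f` at `x`, as a linear functional. -/
noncomputable def grad (f : MvPolynomial (Fin 3) ℂ) (x : Fin 3 → ℂ) : (Fin 3 → ℂ) →ₗ[ℂ] ℂ :=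
  ∑ i : Fin 3, eval x (pderiv i f) • LinearMap.proj i

theorem grad_apply (f : MvPolynomial (Fin 3) ℂ) (x v : Fin 3 → ℂ) :
    grad f x v = ∑ i : Fin 3, eval x (pderiv i f) * v i := by
  simp [grad]

theorem mem_tangentSet (f : MvPolynomial (Fin 3) ℂ) (x v : Fin 3 → ℂ) :
    v ∈ tangentSet f x ↔ grad f x v = 0 := by
  rw [grad_apply]; rfl

theorem grad_ne_zero {f : MvPolynomial (Fin 3) ℂ}
    (hsm : ∀ x : Fin 3 → ℂ, x ≠ 0 → ∃ i : Fin 3, eval x (pderiv i f) ≠ 0)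
    {x : Fin 3 → ℂ} (hx : x ≠ 0) : grad f x ≠ 0 := by
  obtain ⟨i, hi⟩ := hsm x hx
  intro h
  have := congrArg (fun l => l (Pi.single i 1)) h
  simp [grad_apply, Pi.single_apply] at this
  exact hi this

theorem derivative_lineRes (x v : Fin 3 → ℂ) (f : MvPolynomial (Fin 3) ℂ) :
    Polynomial.derivative (lineRes x v f) =
      ∑ i : Fin 3, lineRes x v (pderiv i f) * Polynomial.C (v i) := by
  induction f using MvPolynomial.induction_on with
  | C a => simp [lineRes]
  | add p q hp hq => simp [hp, hq, add_mul, Finset.sum_add_distrib]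
  | mul_X p i hp =>
    have hX : ∀ j, lineRes x v (X j) = Polynomial.C (x j) + Polynomial.C (v j) * Polynomial.X := by
      intro j; simp [lineRes]
    have h1 : ∀ j, lineRes x v (pderiv j (p * X i)) * Polynomial.C (v j) =
        lineRes x v (pderiv j p) * Polynomial.C (v j) * lineRes x v (X i) +
          lineRes x v p * (if j = i then Polynomial.C (v i) else 0) := by
      intro j
      rw [pderiv_mul]
      rcases eq_or_ne j i with rfl | h
      · simp; ring
      · simp [pderiv_X_of_ne (Ne.symm h), h]; ring
    rw [Finset.sum_congr rfl fun j _ => h1 j, Finset.sum_add_distrib, ← Finset.sum_mul, ← hp,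
      ← Finset.mul_sum, map_mul, Polynomial.derivative_mul]
    simp [hX]

theorem grad_eq_derivative (x v : Fin 3 → ℂ) (f : MvPolynomial (Fin 3) ℂ) :
    grad f x v = (Polynomial.derivative (lineRes x v f)).eval 0 := by
  rw [derivative_lineRes, Polynomial.eval_finsetSum, grad_apply]
  simp [eval_lineRes]

theorem eval_smul_of_hom {f : MvPolynomial (Fin 3) ℂ} {n : ℕ} (hf : f.IsHomogeneous n)
    (c : ℂ) (x : Fin 3 → ℂ) : eval (c • x) f = c ^ n * eval x f := by
  rw [eval_eq', eval_eq', Finset.mul_sum]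
  refine Finset.sum_congr rfl fun m hm => ?_
  have : m 0 + m 1 + m 2 = n := by
    have := hf (mem_support_iff.mp hm)
    simpa [Finsupp.weight_apply, Finsupp.sum_fintype, Fin.sum_univ_three] using this
  rw [← this]
  simp [Fin.prod_univ_three, mul_pow, pow_add]
  ring

/-- Euler's identity. -/
theorem grad_self {f : MvPolynomial (Fin 3) ℂ} {n : ℕ} (hf : f.IsHomogeneous n)
    (x : Fin 3 → ℂ) : grad f x x = n * eval x f := by
  have := congrArg (eval x) hf.sum_X_mul_pderiv
  simp at this
  rw [grad_apply, ← this]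
  exact Finset.sum_congr rfl fun i _ => mul_comm _ _

theorem grad_eq_zero_of_pow {f : MvPolynomial (Fin 3) ℂ} {d : ℕ} (hd : 2 ≤ d)
    {x v : Fin 3 → ℂ} {κ : ℂ} (h : ∀ t : ℂ, eval (x + t • v) f = t ^ d * κ) :
    grad f x v = 0 := by
  have : lineRes x v f = Polynomial.X ^ d * Polynomial.C κ := by
    refine Polynomial.funext fun t => ?_
    rw [eval_lineRes, h]
    simp
    ring
  rw [grad_eq_derivative, this]
  simp [Polynomial.derivative_X_pow, show d - 1 ≠ 0 by omega]

theorem exists_comb_of_ker {L : (Fin 3 → ℂ) →ₗ[ℂ] ℂ} (hL : L ≠ 0) {x w v : Fin 3 → ℂ}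
    (hx : L x = 0) (hw : L w = 0) (hi : LinearIndependent ℂ ![x, w]) (hv : L v = 0) :
    ∃ α β : ℂ, v = α • x + β • w := by
  have h1 : Submodule.span ℂ (Set.range ![x, w]) ≤ LinearMap.ker L := by
    rw [Submodule.span_le]
    rintro _ ⟨i, rfl⟩
    fin_cases i <;> simpa
  have h2 := finrank_span_eq_card hi
  have h3 : Module.finrank ℂ (LinearMap.ker L) + 1 = 3 := by
    simpa using Module.Dual.finrank_ker_add_one_of_ne_zero hL
  have h4 := Submodule.eq_of_le_of_finrank_eq h1 (by rw [h2]; simp; omega)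
  have h5 : v ∈ Submodule.span ℂ (Set.range ![x, w]) := by rw [h4]; exact hv
  simp only [Matrix.range_cons, Matrix.range_empty, Set.union_empty, Set.singleton_union] at h5
  obtain ⟨a, b, h⟩ := Submodule.mem_span_pair.mp h5
  exact ⟨a, b, h.symm⟩

theorem exists_indep_in_ker {L : (Fin 3 → ℂ) →ₗ[ℂ] ℂ} {x : Fin 3 → ℂ}
    (hx0 : x ≠ 0) : ∃ w, L w = 0 ∧ LinearIndependent ℂ ![x, w] := by
  have h3 : 2 ≤ Module.finrank ℂ (LinearMap.ker L) := by
    by_cases hL : L = 0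
    · rw [hL, LinearMap.ker_zero, finrank_top]
      simp
    · have : Module.finrank ℂ (LinearMap.ker L) + 1 = 3 := by
        simpa using Module.Dual.finrank_ker_add_one_of_ne_zero hL
      omega
  have h4 : ¬ LinearMap.ker L ≤ ℂ ∙ x := by
    intro h
    have := Submodule.finrank_mono h
    rw [finrank_span_singleton hx0] at this
    omega
  obtain ⟨w, hw, hw'⟩ := SetLike.not_le_iff_exists.mp h4
  refine ⟨w, hw, (LinearIndependent.pair_iff' hx0).mpr fun a ha => hw' ?_⟩
  exact Submodule.mem_span_singleton.mpr ⟨a, ha⟩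

/-- Two vectors do not span `ℂ³`. -/
theorem exists_not_comb (v w : Fin 3 → ℂ) : ∃ n : Fin 3 → ℂ, ∀ α β : ℂ, n ≠ α • v + β • w := by
  have h : Submodule.span ℂ (Set.range ![v, w]) ≠ ⊤ := by
    intro h
    have h1 := finrank_range_le_card (R := ℂ) ![v, w]
    rw [Set.finrank, h] at h1
    simp at h1
  obtain ⟨n, hn⟩ : ∃ n, n ∉ Submodule.span ℂ (Set.range ![v, w]) := by
    by_contra! h'
    exact h (Submodule.eq_top_iff'.mpr h')
  refine ⟨n, fun α β e => hn ?_⟩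
  simp only [Matrix.range_cons, Matrix.range_empty, Set.union_empty, Set.singleton_union]
  exact Submodule.mem_span_pair.mpr ⟨α, β, e.symm⟩

/-- A smooth plane curve of degree at least two contains no line: along such a line the derivative
of `f` in a transverse direction would be a nowhere vanishing form of degree `d - 1 ≥ 1`. -/
theorem no_line {d : ℕ} (hd : 2 ≤ d) {f : MvPolynomial (Fin 3) ℂ} (hf : f.IsHomogeneous d)
    (hsm : ∀ x : Fin 3 → ℂ, x ≠ 0 → ∃ i : Fin 3, eval x (pderiv i f) ≠ 0)
    {v w : Fin 3 → ℂ} (hi : LinearIndependent ℂ ![v, w]) :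
    ∃ α β : ℂ, eval (α • v + β • w) f ≠ 0 := by
  by_contra! h
  obtain ⟨n, hn⟩ := exists_not_comb v w
  have key : ∀ α β : ℂ, α • v + β • w ≠ 0 → grad f (α • v + β • w) n ≠ 0 := by
    intro α β h0 hg
    have e1 : grad f (α • v + β • w) v = 0 := by
      refine grad_eq_zero_of_pow hd (κ := 0) fun t => ?_
      rw [mul_zero, show α • v + β • w + t • v = (α + t) • v + β • w by module]
      exact h _ _
    have e2 : grad f (α • v + β • w) w = 0 := by
      refine grad_eq_zero_of_pow hd (κ := 0) fun t => ?_
      rw [mul_zero, show α • v + β • w + t • w = α • v + (β + t) • w by module]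
      exact h _ _
    obtain ⟨a, b, e⟩ := exists_comb_of_ker (grad_ne_zero hsm h0) e1 e2 hi hg
    exact hn a b e
  let D : MvPolynomial (Fin 3) ℂ := ∑ i, C (n i) * pderiv i f
  have hD : D.IsHomogeneous (d - 1) := by
    refine IsHomogeneous.sum _ _ _ fun i _ => ?_
    simpa using (isHomogeneous_C (Fin 3) (n i)).mul (hf.pderiv (i := i))
  have hDe : ∀ y, eval y D = grad f y n := by
    intro y
    simp [D, grad_apply, mul_comm]
  obtain ⟨hi1, hi2⟩ := LinearIndependent.pair_iff.mp hi |> fun H =>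
    (⟨fun t e => by simpa using (H 1 t e).1, fun e => by
      simpa using (H 0 1 (by simpa using e)).2⟩ :
      (∀ t : ℂ, (1 : ℂ) • v + t • w = 0 → False) ∧ (w = 0 → False))
  obtain ⟨hdeg, hcoe⟩ := aeval_line_natDegree_coeff hD v w
  change (lineRes v w D).natDegree ≤ _ at hdeg
  change (lineRes v w D).coeff _ = eval w D at hcoe
  have hne : (lineRes v w D).coeff (d - 1) ≠ 0 := by
    rw [hcoe, hDe]
    have := key 0 1 (by simpa using hi2)
    simpa using this
  have hpos : 0 < (lineRes v w D).degree := by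
    rw [← Polynomial.natDegree_pos_iff_degree_pos]
    have := Polynomial.le_natDegree_of_ne_zero hne
    omega
  obtain ⟨t, ht⟩ := IsAlgClosed.exists_root _ hpos.ne'
  rw [Polynomial.IsRoot, eval_lineRes, hDe] at ht
  have := key 1 t (hi1 t)
  rw [one_smul] at this
  exact this ht

/-- `x` and `w` span a line on which `f` restricts to `f(w)` times the `d`-th power of the
coordinate of `w`, with `f(w) ≠ 0`. -/
def FlexData (d : ℕ) (f : MvPolynomial (Fin 3) ℂ) (x w : Fin 3 → ℂ) : Prop :=
  LinearIndependent ℂ ![x, w] ∧ eval w f ≠ 0 ∧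
    ∀ α β : ℂ, eval (α • x + β • w) f = β ^ d * eval w f

theorem FlexData.ne_zero {d : ℕ} {f : MvPolynomial (Fin 3) ℂ} {x w : Fin 3 → ℂ}
    (h : FlexData d f x w) : x ≠ 0 := by
  simpa using h.1.ne_zero 0

/-- The restriction of `f` to the tangent line at a total inflection point is a multiple of a `d`-th
power of a linear form; that form vanishes at `x`, and the multiple is nonzero by `no_line`. -/
theorem exists_flexData {d : ℕ} (hd : 2 ≤ d) {f : MvPolynomial (Fin 3) ℂ}
    (hf : f.IsHomogeneous d)
    (hsm : ∀ x : Fin 3 → ℂ, x ≠ 0 → ∃ i : Fin 3, eval x (pderiv i f) ≠ 0)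
    {x : Fin 3 → ℂ} (hx : IsTotalInflection d f x) : ∃ w, FlexData d f x w := by
  obtain ⟨hx0, hfx, c, hc, γ, hγ⟩ := hx
  have hxx : grad f x x = 0 := by rw [grad_self hf, hfx, mul_zero]
  obtain ⟨w, hw, hi⟩ := exists_indep_in_ker (L := grad f x) hx0
  have hmem : ∀ α β : ℂ, eval (α • x + β • w) f = c * (γ (α • x + β • w)) ^ d := by
    intro α β
    refine hγ _ ((mem_tangentSet _ _ _).mpr ?_)
    simp [hxx, hw]
  have hγx : γ x = 0 := by
    have := hmem 1 0
    simpa [hfx, hc, show d ≠ 0 by omega] using this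
  have hform : ∀ α β : ℂ, eval (α • x + β • w) f = β ^ d * eval w f := by
    intro α β
    have h1 := hmem 0 1
    simp at h1
    rw [hmem, h1]
    simp [hγx]
    ring
  refine ⟨w, hi, ?_, hform⟩
  intro h0
  obtain ⟨α, β, h⟩ := no_line hd hf hsm hi
  exact h (by rw [hform, h0, mul_zero])

theorem FlexData.grad_right {d : ℕ} (hd : 2 ≤ d) {f : MvPolynomial (Fin 3) ℂ}
    {x w : Fin 3 → ℂ} (h : FlexData d f x w) : grad f x w = 0 := by
  refine grad_eq_zero_of_pow hd (κ := eval w f) fun t => ?_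
  simpa using h.2.2 1 t

theorem FlexData.eval_left {d : ℕ} (hd : 2 ≤ d) {f : MvPolynomial (Fin 3) ℂ}
    {x w : Fin 3 → ℂ} (h : FlexData d f x w) : eval x f = 0 := by
  simpa [show d ≠ 0 by omega] using h.2.2 1 0

/-- The line `⟨x, w⟩` is the whole tangent line at `x`. -/
theorem FlexData.exists_comb {d : ℕ} (hd : 2 ≤ d) {f : MvPolynomial (Fin 3) ℂ}
    (hf : f.IsHomogeneous d)
    (hsm : ∀ x : Fin 3 → ℂ, x ≠ 0 → ∃ i : Fin 3, eval x (pderiv i f) ≠ 0)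
    {x w : Fin 3 → ℂ} (h : FlexData d f x w) {v : Fin 3 → ℂ} (hv : grad f x v = 0) :
    ∃ α β : ℂ, v = α • x + β • w := by
  refine exists_comb_of_ker (grad_ne_zero hsm h.ne_zero) ?_ (h.grad_right hd) h.1 hv
  rw [grad_self hf, h.eval_left hd, mul_zero]

theorem exists_dual_pair {x w : Fin 3 → ℂ} (hi : LinearIndependent ℂ ![x, w]) :
    ∃ γ : (Fin 3 → ℂ) →ₗ[ℂ] ℂ, γ x = 0 ∧ γ w = 1 := by
  have hx0 : x ≠ 0 := by simpa using hi.ne_zero 0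
  have hw : w ∉ ℂ ∙ x := by
    intro hw
    obtain ⟨a, ha⟩ := Submodule.mem_span_singleton.mp hw
    exact (LinearIndependent.pair_iff' hx0).mp hi a ha
  obtain ⟨φ, h1, h2⟩ := Submodule.exists_le_ker_of_notMem hw
  refine ⟨(φ w)⁻¹ • φ, ?_, by simp [h1]⟩
  have : φ x = 0 := h2 (Submodule.mem_span_singleton_self x)
  simp [this]

theorem FlexData.isTotalInflection {d : ℕ} (hd : 2 ≤ d) {f : MvPolynomial (Fin 3) ℂ}
    (hf : f.IsHomogeneous d)
    (hsm : ∀ x : Fin 3 → ℂ, x ≠ 0 → ∃ i : Fin 3, eval x (pderiv i f) ≠ 0)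
    {x w : Fin 3 → ℂ} (h : FlexData d f x w) : IsTotalInflection d f x := by
  obtain ⟨γ, h1, h2⟩ := exists_dual_pair h.1
  refine ⟨h.ne_zero, h.eval_left hd, eval w f, h.2.1, γ, fun v hv => ?_⟩
  obtain ⟨α, β, rfl⟩ := h.exists_comb hd hf hsm ((mem_tangentSet _ _ _).mp hv)
  rw [h.2.2]
  simp [h1, h2, mul_comm]

/-! ### Lines on the surface -/

/-- The point of `ℂ⁴ = ℂ³ × ℂ` with components `x` and `t`. -/
def lift4 (x : Fin 3 → ℂ) (t : ℂ) : Fin 4 → ℂ := ![x 0, x 1, x 2, t]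

theorem lift4_comp (x : Fin 3 → ℂ) (t : ℂ) : (fun i : Fin 3 => lift4 x t i.castSucc) = x := by
  ext i; fin_cases i <;> rfl

theorem lift4_last (x : Fin 3 → ℂ) (t : ℂ) : lift4 x t 3 = t := rfl

theorem lift4_self (v : Fin 4 → ℂ) : lift4 (fun i => v i.castSucc) (v 3) = v := by
  ext i; fin_cases i <;> rfl

theorem lift4_comb (a b s t : ℂ) (x y : Fin 3 → ℂ) :
    a • lift4 x s + b • lift4 y t = lift4 (a • x + b • y) (a * s + b * t) := by
  ext i; fin_cases i <;> simp [lift4]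

theorem lift4_inj {x y : Fin 3 → ℂ} {s t : ℂ} (h : lift4 x s = lift4 y t) : x = y ∧ s = t := by
  constructor
  · rw [← lift4_comp x s, h, lift4_comp]
  · rw [← lift4_last x s, h, lift4_last]

/-- On a line of the surface, `f` of the first three coordinates is the `d`-th power of the last. -/
theorem liesOn_iff (d : ℕ) (f : MvPolynomial (Fin 3) ℂ) (W : Submodule ℂ (Fin 4 → ℂ)) :
    LiesOn (coverPoly d f) W ↔ ∀ x t, lift4 x t ∈ W → eval x f = t ^ d := by
  have key : ∀ x t, eval (lift4 x t) (coverPoly d f) = t ^ d - eval x f := by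
    intro x t
    rw [coverPoly, map_sub, map_pow, eval_X, eval_rename, lift4_last]
    congr 2
    exact congrArg eval (lift4_comp x t)
  constructor
  · intro h x t hm
    have := h _ hm
    rw [key, sub_eq_zero] at this
    exact this.symm
  · intro h v hv
    rw [← lift4_self v] at hv ⊢
    rw [key, h _ _ hv, sub_self]

/-- The line in `ℙ³` spanned by `(x, 0)` and `(w, τ)`. -/
def lineOf (x w : Fin 3 → ℂ) (τ : ℂ) : Submodule ℂ (Fin 4 → ℂ) :=
  Submodule.span ℂ (Set.range ![lift4 x 0, lift4 w τ])

theorem mem_lineOf {x w : Fin 3 → ℂ} {τ : ℂ} {y : Fin 3 → ℂ} {t : ℂ} :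
    lift4 y t ∈ lineOf x w τ ↔ ∃ a b : ℂ, y = a • x + b • w ∧ t = b * τ := by
  have : Set.range ![lift4 x 0, lift4 w τ] = {lift4 x 0, lift4 w τ} := by
    simp [Set.pair_comm]
  rw [lineOf, this, Submodule.mem_span_pair]
  refine exists_congr fun a => exists_congr fun b => ?_
  rw [lift4_comb, mul_zero, zero_add]
  constructor
  · intro h
    exact ⟨(lift4_inj h).1.symm, (lift4_inj h).2.symm⟩
  · rintro ⟨rfl, rfl⟩; rfl

theorem isLine_lineOf {x w : Fin 3 → ℂ} (τ : ℂ) (hi : LinearIndependent ℂ ![x, w]) :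
    IsLine (lineOf x w τ) := by
  have : LinearIndependent ℂ ![lift4 x 0, lift4 w τ] := by
    rw [LinearIndependent.pair_iff] at hi ⊢
    intro s t h
    rw [lift4_comb] at h
    refine hi s t ?_
    rw [← lift4_comp (s • x + t • w) (s * 0 + t * τ), h]
    rfl
  rw [IsLine, lineOf, finrank_span_eq_card this]
  simp

theorem FlexData.liesOn {d : ℕ} {f : MvPolynomial (Fin 3) ℂ} {x w : Fin 3 → ℂ}
    (h : FlexData d f x w) {τ : ℂ} (hτ : τ ^ d = eval w f) :
    LiesOn (coverPoly d f) (lineOf x w τ) := by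
  rw [liesOn_iff]
  intro y t hy
  obtain ⟨a, b, rfl, rfl⟩ := mem_lineOf.mp hy
  rw [h.2.2, mul_pow, hτ]

theorem FlexData.smul {d : ℕ} {f : MvPolynomial (Fin 3) ℂ} {x w : Fin 3 → ℂ}
    (h : FlexData d f x w) {c : ℂ} (hc : c ≠ 0) : FlexData d f (c • x) w := by
  obtain ⟨h1, h2, h3⟩ := h
  refine ⟨?_, h2, fun α β => by rw [smul_smul, h3]⟩
  rw [LinearIndependent.pair_iff] at h1 ⊢
  intro s t e
  rw [smul_smul] at e
  have := h1 _ _ e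
  exact ⟨by simpa [hc] using this.1, this.2⟩

/-- A nonzero complex number has exactly `d` roots of order `d`. -/
theorem card_pow_eq {d : ℕ} (hd : d ≠ 0) {κ : ℂ} (hκ : κ ≠ 0) :
    Nonempty ({τ : ℂ // τ ^ d = κ} ≃ Fin d) := by
  have hζ := Complex.isPrimitiveRoot_exp d hd
  have hcard := hζ.card_nthRoots κ
  have hex : ∃ α : ℂ, α ^ d = κ := IsAlgClosed.exists_pow_nat_eq κ (Nat.pos_of_ne_zero hd)
  rw [if_pos hex] at hcard
  classical
  have hnd := hζ.nthRoots_nodup hκ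
  have e : {τ : ℂ // τ ^ d = κ} ≃ (Polynomial.nthRoots d κ).toFinset :=
    Equiv.subtypeEquivRight fun τ => by
      rw [Multiset.mem_toFinset, Polynomial.mem_nthRoots (Nat.pos_of_ne_zero hd)]
  refine ⟨e.trans (Finset.equivFinOfCardEq ?_)⟩
  rw [Multiset.toFinset_card_of_nodup hnd, hcard]

/-- Every line on the surface is spanned by some `(x, 0)` and `(w, τ)` lying over the tangent line
`⟨x, w⟩` at a total inflection point `x`. -/
theorem exists_of_line {d : ℕ} (hd : 2 ≤ d) {f : MvPolynomial (Fin 3) ℂ}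
    (hf : f.IsHomogeneous d)
    (hsm : ∀ x : Fin 3 → ℂ, x ≠ 0 → ∃ i : Fin 3, eval x (pderiv i f) ≠ 0)
    {W : Submodule ℂ (Fin 4 → ℂ)} (hW : IsLine W) (hS : LiesOn (coverPoly d f) W) :
    ∃ x w τ, FlexData d f x w ∧ lift4 x 0 ∈ W ∧ lift4 w τ ∈ W ∧ τ ^ d = eval w f := by
  rw [liesOn_iff] at hS
  have hf0 : eval (0 : Fin 3 → ℂ) f = 0 := by
    simpa [show d ≠ 0 by omega] using eval_smul_of_hom hf 0 0
  -- the hyperplane `t = 0` meets the line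
  obtain ⟨x, hx0, hxW⟩ : ∃ x, x ≠ 0 ∧ lift4 x 0 ∈ W := by
    let T : W →ₗ[ℂ] ℂ := (LinearMap.proj 3).comp W.subtype
    have hker : LinearMap.ker T ≠ ⊥ := by
      apply LinearMap.ker_ne_bot_of_finrank_lt
      rw [show Module.finrank ℂ W = 2 from hW]; simp
    obtain ⟨⟨v, hvW⟩, hv, hv0⟩ := Submodule.exists_mem_ne_zero_of_ne_bot hker
    have hv3 : v 3 = 0 := hv
    refine ⟨fun i => v i.castSucc, ?_, ?_⟩
    · intro h
      apply hv0
      rw [Subtype.ext_iff]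
      change v = 0
      rw [← lift4_self v, h, hv3]
      ext i; fin_cases i <;> rfl
    · rw [← hv3, lift4_self]; exact hvW
  have hnot : ¬ W ≤ ℂ ∙ lift4 x 0 := by
    intro h
    have h1 := Submodule.finrank_mono h
    rw [show Module.finrank ℂ W = 2 from hW] at h1
    have h2 := finrank_span_le_card (R := ℂ) ({lift4 x 0} : Set (Fin 4 → ℂ))
    simp at h2
    omega
  obtain ⟨v, hvW, hv⟩ := SetLike.not_le_iff_exists.mp hnot
  rw [← lift4_self v] at hvW hv
  set w : Fin 3 → ℂ := fun i => v i.castSucc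
  set τ := v 3
  have hcomb : ∀ a b : ℂ, lift4 (a • x + b • w) (b * τ) ∈ W := by
    intro a b
    have := W.add_mem (W.smul_mem a hxW) (W.smul_mem b hvW)
    rwa [lift4_comb, mul_zero, zero_add] at this
  have hi : LinearIndependent ℂ ![x, w] := by
    refine (LinearIndependent.pair_iff' hx0).mpr fun a ha => hv ?_
    have h1 := hS _ _ (hcomb (-a) 1)
    rw [← ha, one_smul, neg_smul, neg_add_cancel, hf0, one_mul] at h1
    have h2 : τ = 0 := pow_eq_zero_iff (by omega) |>.mp h1.symm
    refine Submodule.mem_span_singleton.mpr ⟨a, ?_⟩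
    rw [h2, ← ha]
    simpa using lift4_comb a 0 0 0 x x
  have hform : ∀ α β : ℂ, eval (α • x + β • w) f = β ^ d * τ ^ d := by
    intro α β
    rw [hS _ _ (hcomb α β), mul_pow]
  have hw : τ ^ d = eval w f := by
    have := hform 0 1
    simpa using this.symm
  refine ⟨x, w, τ, ⟨hi, ?_, by simpa only [hw] using hform⟩, hxW, hvW, hw⟩
  intro h0
  obtain ⟨α, β, h⟩ := no_line hd hf hsm hi
  exact h (by rw [hform, hw, h0, mul_zero])

theorem span_eq_of_mem {ℓ : Submodule ℂ (Fin 3 → ℂ)} (hℓ : Module.finrank ℂ ℓ = 1)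
    {x : Fin 3 → ℂ} (hx : x ∈ ℓ) (hx0 : x ≠ 0) : ℓ = ℂ ∙ x := by
  refine (Submodule.eq_of_le_of_finrank_eq ?_ ?_).symm
  · rwa [Submodule.span_singleton_le_iff_mem]
  · rw [finrank_span_singleton hx0, hℓ]

/-- The lines on the surface are in bijection with the pairs of a total inflection point `⟨x⟩` and
a `d`-th root `τ` of `f(w)`, where `w` is a chosen second point of the tangent line at `x`. The
equality also holds when both sets are infinite, since `Nat.card` is then `0` on both sides. -/
theorem card_lines_eq {d : ℕ} (hd : 2 ≤ d) {f : MvPolynomial (Fin 3) ℂ}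
    (hf : f.IsHomogeneous d)
    (hsm : ∀ x : Fin 3 → ℂ, x ≠ 0 → ∃ i : Fin 3, eval x (pderiv i f) ≠ 0) :
    Nat.card {W : Submodule ℂ (Fin 4 → ℂ) // IsLine W ∧ LiesOn (coverPoly d f) W} =
      numTotalInflections d f * d := by
  let P := {ℓ : Submodule ℂ (Fin 3 → ℂ) //
    Module.finrank ℂ ℓ = 1 ∧ ∃ x ∈ ℓ, IsTotalInflection d f x}
  have hch : ∀ ℓ : P, ∃ x w, x ∈ ℓ.1 ∧ FlexData d f x w := by
    rintro ⟨ℓ, h1, x, hx, hfl⟩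
    obtain ⟨w, hw⟩ := exists_flexData hd hf hsm hfl
    exact ⟨x, w, hx, hw⟩
  choose x w hxm hfl using hch
  have hspan : ∀ ℓ : P, ℓ.1 = ℂ ∙ x ℓ := fun ℓ => span_eq_of_mem ℓ.2.1 (hxm ℓ) (hfl ℓ).ne_zero
  let Φ : (Σ ℓ : P, {τ : ℂ // τ ^ d = eval (w ℓ) f}) →
      {W : Submodule ℂ (Fin 4 → ℂ) // IsLine W ∧ LiesOn (coverPoly d f) W} :=
    fun p => ⟨lineOf (x p.1) (w p.1) p.2.1, isLine_lineOf _ (hfl p.1).1, (hfl p.1).liesOn p.2.2⟩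
  have hΦ : Function.Bijective Φ := by
    constructor
    · rintro ⟨ℓ, τ, hτ⟩ ⟨ℓ', τ', hτ'⟩ h
      have h : lineOf (x ℓ) (w ℓ) τ = lineOf (x ℓ') (w ℓ') τ' := congrArg Subtype.val h
      have hτ0 : τ ≠ 0 := by
        rintro rfl
        rw [zero_pow (by omega)] at hτ
        exact (hfl ℓ).2.1 hτ.symm
      have h1 : lift4 (x ℓ') 0 ∈ lineOf (x ℓ) (w ℓ) τ := by
        rw [h]
        exact mem_lineOf.mpr ⟨1, 0, by simp, by simp⟩
      obtain ⟨a, b, h2, h3⟩ := mem_lineOf.mp h1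
      have hb : b = 0 := by simpa [hτ0] using h3.symm
      rw [hb, zero_smul, add_zero] at h2
      have hℓ : ℓ = ℓ' := by
        apply Subtype.ext
        rw [hspan ℓ']
        refine span_eq_of_mem ℓ.2.1 ?_ (hfl ℓ').ne_zero
        rw [h2]
        exact ℓ.1.smul_mem _ (hxm ℓ)
      subst hℓ
      have h4 : lift4 (w ℓ) τ' ∈ lineOf (x ℓ) (w ℓ) τ := by
        rw [h]
        exact mem_lineOf.mpr ⟨0, 1, by simp, by simp⟩
      obtain ⟨a, b, h5, h6⟩ := mem_lineOf.mp h4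
      have h7 := (LinearIndependent.pair_iff.mp (hfl ℓ).1) a (b - 1) (by
        rw [sub_smul, one_smul, ← add_sub_assoc, ← h5, sub_self])
      have hb1 : b = 1 := by linear_combination h7.2
      rw [hb1, one_mul] at h6
      subst h6
      rfl
    · rintro ⟨W, hW, hS⟩
      -- `W` comes with its own spanning vectors `(y, 0)` and `(v, τ)`; the vectors chosen for the
      -- point `⟨y⟩` are `x = c y` and `w = α x + β v`, so `W` corresponds to the root `β τ`
      obtain ⟨y, v, τ, hyv, hyW, hvW, hτ⟩ := exists_of_line hd hf hsm hW hS
      let ℓ : P := ⟨ℂ ∙ y, finrank_span_singleton hyv.ne_zero, y,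
        Submodule.mem_span_singleton_self y, hyv.isTotalInflection hd hf hsm⟩
      obtain ⟨c, hc⟩ := Submodule.mem_span_singleton.mp (hxm ℓ)
      have hc0 : c ≠ 0 := by
        rintro rfl
        exact (hfl ℓ).ne_zero (by rw [← hc, zero_smul])
      have hyv' := hyv.smul hc0
      rw [hc] at hyv'
      obtain ⟨α, β, hw⟩ := hyv'.exists_comb hd hf hsm ((hfl ℓ).grad_right hd)
      refine ⟨⟨ℓ, β * τ, ?_⟩, ?_⟩
      · rw [hw, hyv'.2.2, mul_pow, hτ]
      · apply Subtype.ext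
        change lineOf (x ℓ) (w ℓ) (β * τ) = W
        have hxW : lift4 (x ℓ) 0 ∈ W := by
          have := W.smul_mem c hyW
          have e := lift4_comb c 0 0 0 y y
          simp only [zero_smul, add_zero, mul_zero] at e
          rwa [e, hc] at this
        refine Submodule.eq_of_le_of_finrank_eq ?_ ?_
        · rw [lineOf, Submodule.span_le]
          rintro _ ⟨i, rfl⟩
          fin_cases i
          · exact hxW
          · have := W.add_mem (W.smul_mem α hxW) (W.smul_mem β hvW)
            rw [lift4_comb, mul_zero, zero_add, ← hw] at this
            exact this
        · rw [show Module.finrank ℂ W = 2 from hW]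
          exact isLine_lineOf _ (hfl ℓ).1
  rw [← Nat.card_eq_of_bijective Φ hΦ]
  have hE : ∀ ℓ : P, Nonempty ({τ : ℂ // τ ^ d = eval (w ℓ) f} ≃ Fin d) :=
    fun ℓ => card_pow_eq (by omega) (hfl ℓ).2.1
  rw [Nat.card_congr ((Equiv.sigmaCongrRight fun ℓ => (hE ℓ).some).trans
    (Equiv.sigmaEquivProd P (Fin d))), Nat.card_prod, Nat.card_fin]
  rfl

/-! ### Conics, and polynomials vanishing on a plane -/

/-- The tangent line at a point of a smooth conic meets the conic there with multiplicity two. -/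
theorem FlexData.of_conic {f : MvPolynomial (Fin 3) ℂ} (hf : f.IsHomogeneous 2)
    (hsm : ∀ x : Fin 3 → ℂ, x ≠ 0 → ∃ i : Fin 3, eval x (pderiv i f) ≠ 0)
    {x : Fin 3 → ℂ} (hx0 : x ≠ 0) (hfx : eval x f = 0) : ∃ w, FlexData 2 f x w := by
  obtain ⟨w, hw, hi⟩ := exists_indep_in_ker (L := grad f x) hx0
  obtain ⟨hdeg, hcoe⟩ := aeval_line_natDegree_coeff hf x w
  change (lineRes x w f).natDegree ≤ _ at hdeg
  change (lineRes x w f).coeff _ = eval w f at hcoe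
  have h0 : (lineRes x w f).coeff 0 = 0 := by
    rw [Polynomial.coeff_zero_eq_eval_zero, eval_lineRes, zero_smul, add_zero, hfx]
  have h1 : (lineRes x w f).coeff 1 = 0 := by
    rw [grad_eq_derivative, ← Polynomial.coeff_zero_eq_eval_zero,
      Polynomial.coeff_derivative] at hw
    simpa using hw
  have hline : ∀ t : ℂ, eval (x + t • w) f = t ^ 2 * eval w f := by
    intro t
    rw [← eval_lineRes, Polynomial.eval_eq_sum_range' (show _ < 3 by omega)]
    simp [Finset.sum_range_succ, h0, h1, hcoe, mul_comm]
  have hform : ∀ α β : ℂ, eval (α • x + β • w) f = β ^ 2 * eval w f := by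
    intro α β
    rcases eq_or_ne α 0 with rfl | hα
    · rw [zero_smul, zero_add, eval_smul_of_hom hf]
    · have : α • x + β • w = α • (x + (β / α) • w) := by
        rw [smul_add, smul_smul, mul_div_cancel₀ _ hα]
      rw [this, eval_smul_of_hom hf, hline]
      field_simp
  refine ⟨w, hi, ?_, hform⟩
  intro h0
  obtain ⟨α, β, h⟩ := no_line le_rfl hf hsm hi
  exact h (by rw [hform, h0, mul_zero])

/-- The vectors `a`, `b`, `q` are linearly independent. -/
theorem indep_three {a b q : Fin 3 → ℂ} (hi : LinearIndependent ℂ ![q, b])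
    (ha : ∀ α β : ℂ, a ≠ α • q + β • b) (α β γ : ℂ) (h : α • a + β • b + γ • q = 0) :
    α = 0 ∧ β = 0 ∧ γ = 0 := by
  have hα : α = 0 := by
    by_contra hα
    refine ha (-γ / α) (-β / α) ?_
    have : a = α⁻¹ • (α • a + β • b + γ • q) + (-γ / α) • q + (-β / α) • b := by
      rw [smul_add, smul_add, smul_smul, inv_mul_cancel₀ hα]
      module
    rw [h, smul_zero, zero_add] at this
    exact this
  subst hα
  rw [zero_smul, zero_add, add_comm] at h
  have := LinearIndependent.pair_iff.mp hi _ _ h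
  exact ⟨rfl, this.2, this.1⟩

theorem ne_zero_of_smooth {f : MvPolynomial (Fin 3) ℂ}
    (hsm : ∀ x : Fin 3 → ℂ, x ≠ 0 → ∃ i : Fin 3, eval x (pderiv i f) ≠ 0) : f ≠ 0 := by
  rintro rfl
  obtain ⟨i, hi⟩ := hsm 1 one_ne_zero
  simp at hi

/-- Every point of a smooth conic is a total inflection point, so their number is infinite and
`numTotalInflections` takes the value `0`. -/
theorem numTotalInflections_conic {f : MvPolynomial (Fin 3) ℂ} (hf : f.IsHomogeneous 2)
    (hsm : ∀ x : Fin 3 → ℂ, x ≠ 0 → ∃ i : Fin 3, eval x (pderiv i f) ≠ 0) :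
    numTotalInflections 2 f = 0 := by
  obtain ⟨q, hq⟩ : ∃ q, eval q f ≠ 0 := by
    by_contra! h
    exact ne_zero_of_smooth hsm (MvPolynomial.funext fun v => by simpa using h v)
  have hq0 : q ≠ 0 := by
    rintro rfl
    exact hq (by
      simpa only [zero_smul, zero_pow two_ne_zero, zero_mul] using eval_smul_of_hom hf 0 0)
  obtain ⟨b, -, hi⟩ := exists_indep_in_ker (L := 0) hq0
  obtain ⟨a, ha⟩ := exists_not_comb q b
  -- every line through `q` meets the conic
  have hex : ∀ s : ℂ, ∃ z : ℂ, eval (a + s • b + z • q) f = 0 := by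
    intro s
    obtain ⟨-, hcoe⟩ := aeval_line_natDegree_coeff hf (a + s • b) q
    change (lineRes (a + s • b) q f).coeff _ = eval q f at hcoe
    have hpos : 0 < (lineRes (a + s • b) q f).degree := by
      rw [← Polynomial.natDegree_pos_iff_degree_pos]
      have := Polynomial.le_natDegree_of_ne_zero (hcoe.trans_ne hq)
      omega
    obtain ⟨z, hz⟩ := IsAlgClosed.exists_root _ hpos.ne'
    rw [Polynomial.IsRoot, eval_lineRes] at hz
    exact ⟨z, hz⟩
  choose z hz using hex
  have hne : ∀ s, a + s • b + z s • q ≠ 0 := by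
    intro s h
    have := (indep_three hi ha 1 s (z s) (by rwa [one_smul])).1
    exact one_ne_zero this
  let Φ : ℂ → {ℓ : Submodule ℂ (Fin 3 → ℂ) //
      Module.finrank ℂ ℓ = 1 ∧ ∃ x ∈ ℓ, IsTotalInflection 2 f x} := fun s =>
    ⟨ℂ ∙ (a + s • b + z s • q), finrank_span_singleton (hne s), a + s • b + z s • q,
      Submodule.mem_span_singleton_self _,
      (FlexData.of_conic hf hsm (hne s) (hz s)).choose_spec.isTotalInflection le_rfl hf hsm⟩
  have hΦ : Function.Injective Φ := by
    intro s s' h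
    have h1 : (ℂ ∙ (a + s • b + z s • q)) = ℂ ∙ (a + s' • b + z s' • q) :=
      congrArg Subtype.val h
    have h2 : a + s • b + z s • q ∈ ℂ ∙ (a + s' • b + z s' • q) := by
      rw [← h1]; exact Submodule.mem_span_singleton_self _
    obtain ⟨c, hc⟩ := Submodule.mem_span_singleton.mp h2
    have h3 := indep_three hi ha (c - 1) (c * s' - s) (c * z s' - z s) (by
      rw [← sub_eq_zero] at hc
      rw [← hc]
      module)
    have hc1 : c = 1 := by linear_combination h3.1
    have := h3.2.1
    rw [hc1] at this
    linear_combination -this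
  have : Infinite {ℓ : Submodule ℂ (Fin 3 → ℂ) //
      Module.finrank ℂ ℓ = 1 ∧ ∃ x ∈ ℓ, IsTotalInflection 2 f x} := Infinite.of_injective Φ hΦ
  exact Nat.card_eq_zero_of_infinite

/-- The linear form attached to a linear functional, as a polynomial. -/
noncomputable def lin (L : (Fin 3 → ℂ) →ₗ[ℂ] ℂ) : MvPolynomial (Fin 3) ℂ :=
  ∑ i, C (L (Pi.single i 1)) * X i

theorem eval_lin (L : (Fin 3 → ℂ) →ₗ[ℂ] ℂ) (v : Fin 3 → ℂ) : eval v (lin L) = L v := by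
  rw [LinearMap.pi_apply_eq_sum_univ L v]
  simp only [lin, map_sum, map_mul, eval_C, eval_X, smul_eq_mul]
  refine Finset.sum_congr rfl fun i _ => ?_
  rw [mul_comm]
  congr 2
  ext j
  simp [Pi.single_apply, eq_comm]

theorem pderiv_lin (L : (Fin 3 → ℂ) →ₗ[ℂ] ℂ) (i : Fin 3) :
    pderiv i (lin L) = C (L (Pi.single i 1)) := by
  simp [lin, Pi.single_apply]

/-- A polynomial vanishing on the plane `L = 0` is divisible by `L`. -/
theorem lin_dvd {f : MvPolynomial (Fin 3) ℂ} {L : (Fin 3 → ℂ) →ₗ[ℂ] ℂ} (hL : L ≠ 0)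
    (h : ∀ v, L v = 0 → eval v f = 0) : lin L ∣ f := by
  obtain ⟨m, hm⟩ : ∃ m, L m ≠ 0 := by
    by_contra! hall
    exact hL (LinearMap.ext hall)
  -- `σ` is the pullback along the projection onto `ker L` in the direction of `m`
  let σ : MvPolynomial (Fin 3) ℂ →ₐ[ℂ] MvPolynomial (Fin 3) ℂ :=
    aeval fun i => X i - C (m i / L m) * lin L
  have h0 : σ f = 0 := by
    refine MvPolynomial.funext fun v => ?_
    have : eval v (σ f) = eval (v - (L v / L m) • m) f := by
      simp only [σ]
      rw [← aeval_eq_eval, ← aeval_eq_eval, ← AlgHom.comp_apply]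
      congr 1
      refine MvPolynomial.algHom_ext fun i => ?_
      simp [eval_lin]
      ring
    rw [this, map_zero]
    refine h _ ?_
    rw [map_sub, map_smul, smul_eq_mul, div_mul_cancel₀ _ hm, sub_self]
  let π := Ideal.Quotient.mkₐ ℂ (Ideal.span {lin L})
  have hπ : π (lin L) = 0 :=
    Ideal.Quotient.eq_zero_iff_mem.mpr (Ideal.mem_span_singleton_self _)
  have hc : π.comp σ = π := by
    refine MvPolynomial.algHom_ext fun i => ?_
    simp [σ, hπ]
  have : π f = 0 := by
    rw [← hc, AlgHom.comp_apply, h0, map_zero]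
  exact Ideal.mem_span_singleton.mp (Ideal.Quotient.eq_zero_iff_mem.mp this)

/-! ### The Hessian at a total inflection point -/

/-- The Hessian determinant of a ternary polynomial. -/
noncomputable def hess (f : MvPolynomial (Fin 3) ℂ) : MvPolynomial (Fin 3) ℂ :=
  (Matrix.of fun i j : Fin 3 => pderiv i (pderiv j f)).det

/-- Modulo `l`, the symmetric matrix `e U Uᵀ + Λ Gᵀ + G Λᵀ + l H` is the Gram matrix of a form of
determinant `-e` in terms of the three linear forms `U`, `Λ`, `G`. -/
theorem dvd_det_add {R : Type*} [CommRing R] (e l : R) (U Λ G : Fin 3 → R)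
    (H : Fin 3 → Fin 3 → R) :
    l ∣ (Matrix.of fun i j : Fin 3 =>
      e * (U i * U j) + Λ i * G j + Λ j * G i + l * H i j).det +
        e * (Matrix.of ![U, Λ, G]).det ^ 2 := by
  rw [← Ideal.mem_span_singleton, ← Ideal.Quotient.eq_zero_iff_mem]
  have hl : Ideal.Quotient.mk (Ideal.span {l}) l = 0 :=
    Ideal.Quotient.eq_zero_iff_mem.mpr (Ideal.mem_span_singleton_self _)
  simp only [Matrix.det_fin_three, Matrix.of_apply, map_add, map_sub, map_mul, map_pow, hl,
    zero_mul, add_zero, Matrix.cons_val]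
  ring

/-- The second derivatives of `c U ^ (k + 2) + Λ g`; this is the shape to which `dvd_det_add`
applies. -/
theorem pderiv_pderiv_normalForm (k : ℕ) (c : ℂ) (U Λ : (Fin 3 → ℂ) →ₗ[ℂ] ℂ)
    (g : MvPolynomial (Fin 3) ℂ) (i j : Fin 3) :
    pderiv i (pderiv j (C c * lin U ^ (k + 2) + lin Λ * g)) =
      C (c * (k + 2) * (k + 1)) * lin U ^ k *
          (C (U (Pi.single i 1)) * C (U (Pi.single j 1))) +
        C (Λ (Pi.single i 1)) * pderiv j g + C (Λ (Pi.single j 1)) * pderiv i g +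
        lin Λ * pderiv i (pderiv j g) := by
  have h1 : ∀ (m : ℕ) (j : Fin 3), pderiv j (lin U ^ (m + 1)) =
      C ((m : ℂ) + 1) * lin U ^ m * C (U (Pi.single j 1)) := by
    intro m j
    rw [Derivation.leibniz_pow, pderiv_lin]
    simp [mul_assoc]
  simp only [map_add, pderiv_mul, h1, pderiv_C, pderiv_lin, zero_mul, zero_add, mul_zero,
    add_zero, map_mul]
  push_cast
  simp only [map_add, map_one, map_ofNat]
  ring

/-- Local form of a smooth curve at a total inflection point `p`: up to a multiple of the tangent
line, `f` is the `d`-th power of a linear form `U` through `p`, and modulo `f` the Hessian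
is `U ^ (d - 2)` up to factors that do not vanish at `p`. -/
theorem FlexData.exists_localForm {d : ℕ} (hd : 2 ≤ d) {f : MvPolynomial (Fin 3) ℂ}
    (hf : f.IsHomogeneous d)
    (hsm : ∀ x : Fin 3 → ℂ, x ≠ 0 → ∃ i : Fin 3, eval x (pderiv i f) ≠ 0)
    {p w q : Fin 3 → ℂ} (h : FlexData d f p w) (hq : eval q f ≠ 0) :
    ∃ (U Λ : (Fin 3 → ℂ) →ₗ[ℂ] ℂ) (c : ℂ) (g A W : MvPolynomial (Fin 3) ℂ),
      U q ≠ 0 ∧ U p = 0 ∧ c ≠ 0 ∧ eval p g = 1 ∧ f = C c * lin U ^ d + lin Λ * g ∧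
      g * hess f = f * A + lin U ^ (d - 2) * W ∧ eval p W ≠ 0 := by
  obtain ⟨γ, hγp, hγw⟩ := exists_dual_pair h.1
  set Λ := grad f p with hΛ
  have hΛ0 : Λ ≠ 0 := grad_ne_zero hsm h.ne_zero
  have hΛp : Λ p = 0 := by rw [hΛ, grad_self hf, h.eval_left hd, mul_zero]
  have hΛw : Λ w = 0 := h.grad_right hd
  obtain ⟨U, hUq, hUp, hUw⟩ : ∃ U : (Fin 3 → ℂ) →ₗ[ℂ] ℂ, U q ≠ 0 ∧ U p = 0 ∧ U w = 1 := by
    by_cases hΛq : Λ q = 0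
    · refine ⟨γ, fun hγq => ?_, hγp, hγw⟩
      obtain ⟨α, β, rfl⟩ := h.exists_comb hd hf hsm hΛq
      simp [hγp, hγw] at hγq
      subst hγq
      exact hq (by rw [h.2.2, zero_pow (by omega), zero_mul])
    · refine ⟨γ + ((1 - γ q) / Λ q) • Λ, ?_, by simp [hγp, hΛp], by simp [hγw, hΛw]⟩
      simp [div_mul_cancel₀ _ hΛq]
  set c := eval w f with hc
  have hc0 : c ≠ 0 := h.2.1
  obtain ⟨g, hg⟩ : lin Λ ∣ f - C c * lin U ^ d := by
    refine lin_dvd hΛ0 fun v hv => ?_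
    obtain ⟨α, β, rfl⟩ := h.exists_comb hd hf hsm hv
    rw [map_sub, h.2.2, map_mul, map_pow, eval_lin, eval_C]
    simp [hUp, hUw, hc, mul_comm]
  have hfg : f = C c * lin U ^ d + lin Λ * g := by rw [← hg]; ring
  obtain ⟨k, rfl⟩ : ∃ k, d = k + 2 := ⟨d - 2, by omega⟩
  have hΛi : ∀ i, Λ (Pi.single i 1) = eval p (pderiv i f) := by
    intro i
    simp [hΛ, grad_apply, Pi.single_apply]
  obtain ⟨i₀, hi₀⟩ := hsm p h.ne_zero
  have hgp : eval p g = 1 := by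
    have h1 : eval p (pderiv i₀ f) = eval p (pderiv i₀ f) * eval p g := by
      conv_lhs => rw [hfg]
      rw [← hΛi i₀]
      simp [pderiv_lin, eval_lin, hUp, hΛp, Derivation.leibniz_pow]
      exact mul_comm _ _
    exact (mul_left_cancel₀ hi₀ (by rw [mul_one]; exact h1)).symm
  have hsecond := pderiv_pderiv_normalForm k c U Λ g
  rw [← hfg] at hsecond
  -- Euler's identity for the first derivative of `f` that does not vanish at `p`
  have hGp : grad g p p = k + 1 := by
    have h1 := grad_self (hf.pderiv (i := i₀)) p
    rw [grad_apply] at h1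
    have h2 : ∀ i, eval p (pderiv i (pderiv i₀ f)) * p i =
        c * (k + 2) * (k + 1) * U p ^ k * U (Pi.single i₀ 1) * (p i * U (Pi.single i 1)) +
        eval p (pderiv i₀ g) * (p i * Λ (Pi.single i 1)) +
        eval p (pderiv i₀ f) * (eval p (pderiv i g) * p i) := by
      intro i
      rw [hsecond]
      simp only [map_add, map_mul, map_pow, eval_C, eval_lin, hΛp, zero_mul, add_zero]
      rw [hΛi i₀]
      ring
    have hlin : ∀ L : (Fin 3 → ℂ) →ₗ[ℂ] ℂ, ∑ i, p i * L (Pi.single i 1) = L p := by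
      intro L
      rw [← eval_lin]
      simp [lin, mul_comm]
    rw [Finset.sum_congr rfl fun i _ => h2 i, Finset.sum_add_distrib, Finset.sum_add_distrib,
      ← Finset.mul_sum, ← Finset.mul_sum, ← Finset.mul_sum, hlin, hlin, hUp, hΛp,
      ← grad_apply] at h1
    simp only [mul_zero, zero_add] at h1
    rw [mul_comm] at h1
    have := mul_right_cancel₀ hi₀ h1
    rw [this]
    push_cast [show k + 2 - 1 = k + 1 by omega]
    rfl
  let D : MvPolynomial (Fin 3) ℂ := (Matrix.of ![fun i => C (U (Pi.single i 1)),
    fun i => C (Λ (Pi.single i 1)), fun i => pderiv i g]).det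
  -- the forms `U`, `Λ` and `grad g p` are independent: `U` and `Λ` vanish together only on
  -- multiples of `p`, where `grad g p` is nonzero
  have hDp : eval p D ≠ 0 := by
    intro h0
    have h1 : (Matrix.of ![fun i => U (Pi.single i 1), fun i => Λ (Pi.single i 1),
        fun i => eval p (pderiv i g)]).det = 0 := by
      rw [← h0]
      simp [D, Matrix.det_fin_three]
    obtain ⟨v, hv0, hv⟩ := Matrix.exists_mulVec_eq_zero_iff.mpr h1
    have hlin : ∀ L : (Fin 3 → ℂ) →ₗ[ℂ] ℂ, ∑ i, L (Pi.single i 1) * v i = L v := by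
      intro L
      rw [← eval_lin]
      simp [lin]
    have hUv : U v = 0 := by
      rw [← hlin]; simpa [Matrix.mulVec, dotProduct] using congrFun hv 0
    have hΛv : Λ v = 0 := by
      rw [← hlin]; simpa [Matrix.mulVec, dotProduct] using congrFun hv 1
    have hGv : grad g p v = 0 := by
      rw [grad_apply]; simpa [Matrix.mulVec, dotProduct] using congrFun hv 2
    obtain ⟨α, β, rfl⟩ := h.exists_comb hd hf hsm hΛv
    have hβ : β = 0 := by simpa [hUp, hUw] using hUv
    subst hβ
    have hα : α = 0 := by
      have : (k : ℂ) + 1 ≠ 0 := by exact_mod_cast Nat.succ_ne_zero k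
      simpa [hGp, this] using hGv
    simp [hα] at hv0
  obtain ⟨A, hA⟩ : lin Λ ∣ hess f + C (c * (k + 2) * (k + 1)) * lin U ^ k * D ^ 2 := by
    have := dvd_det_add (C (c * (k + 2) * (k + 1)) * lin U ^ k) (lin Λ)
      (fun i => C (U (Pi.single i 1))) (fun i => C (Λ (Pi.single i 1))) (fun i => pderiv i g)
      (fun i j => pderiv i (pderiv j g))
    simp only [← hsecond] at this
    exact this
  refine ⟨U, Λ, c, g, A, -C c * lin U ^ 2 * A - C (c * (k + 2) * (k + 1)) * g * D ^ 2,
    hUq, hUp, hc0, hgp, hfg, ?_, ?_⟩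
  · rw [show k + 2 - 2 = k by omega]
    have h1 : hess f = lin Λ * A - C (c * (k + 2) * (k + 1)) * lin U ^ k * D ^ 2 := by
      rw [← hA]; ring
    rw [h1]
    linear_combination (-A) * hfg
  · have h1 : (k : ℂ) + 1 ≠ 0 := by exact_mod_cast Nat.succ_ne_zero k
    have h2 : (k : ℂ) + 2 ≠ 0 := by exact_mod_cast Nat.succ_ne_zero (k + 1)
    simp [eval_lin, hUp, hgp, hc0, h1, h2, hDp]

/-! ### Norms of bivariate polynomials -/

/-- A monic polynomial `F` over `ℂ[s]` is the product of a part coprime to `h` over `ℂ(s)` and of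
a part all of whose zeros lie on common irreducible components of `F` and `h`. -/
theorem exists_split (F h : Polynomial (Polynomial ℂ)) (hF : F.Monic) :
    ∃ F' E : Polynomial (Polynomial ℂ), F'.Monic ∧ F = F' * E ∧
      IsCoprime (F'.map (algebraMap (Polynomial ℂ) (FractionRing (Polynomial ℂ))))
        (h.map (algebraMap (Polynomial ℂ) (FractionRing (Polynomial ℂ)))) ∧
      ∀ s z, E.evalEval s z = 0 →
        ∃ P, P.Monic ∧ Irreducible P ∧ P ∣ F ∧ P ∣ h ∧ P.evalEval s z = 0 := by
  induction hn : F.natDegree using Nat.strong_induction_on generalizing F with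
  | _ n ih =>
  by_cases hu : IsUnit F
  · refine ⟨F, 1, hF, (mul_one F).symm, ?_, fun s z h0 => ?_⟩
    · rw [hF.eq_one_of_isUnit hu, Polynomial.map_one]
      exact isCoprime_one_left
    · simp at h0
  · obtain ⟨P₀, hP₀, Q₀, hPQ₀⟩ := WfDvdMonoid.exists_irreducible_factor hu hF.ne_zero
    obtain ⟨P, hPm, hPi, hPF⟩ : ∃ P : Polynomial (Polynomial ℂ), P.Monic ∧ Irreducible P ∧
        P ∣ F := by
      have hlc : P₀.leadingCoeff * Q₀.leadingCoeff = 1 := by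
        rw [← Polynomial.leadingCoeff_mul, ← hPQ₀, hF.leadingCoeff]
      have hun : IsUnit (Polynomial.C Q₀.leadingCoeff) :=
        (IsUnit.of_mul_eq_one_right _ hlc).map Polynomial.C
      have hass : Associated P₀ (P₀ * Polynomial.C Q₀.leadingCoeff) :=
        (associated_mul_unit_right P₀ _ hun)
      refine ⟨P₀ * Polynomial.C Q₀.leadingCoeff, ?_, hass.irreducible hP₀,
        hass.dvd_iff_dvd_left.mp ⟨Q₀, hPQ₀⟩⟩
      rw [Polynomial.Monic, Polynomial.leadingCoeff_mul, Polynomial.leadingCoeff_C, hlc]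
    obtain ⟨F₁, rfl⟩ := hPF
    have hF₁ : F₁.Monic := hPm.of_mul_monic_left hF
    have hdeg : 0 < P.natDegree := by
      rw [Nat.pos_iff_ne_zero]
      intro h0
      rw [hPm.natDegree_eq_zero] at h0
      exact hPi.not_isUnit (h0 ▸ isUnit_one)
    have hlt : F₁.natDegree < n := by
      rw [← hn, hPm.natDegree_mul hF₁]
      omega
    obtain ⟨F', E, hF', hFE, hcop, hE⟩ := ih _ hlt F₁ hF₁ rfl
    by_cases hPh : P ∣ h
    · refine ⟨F', P * E, hF', by rw [hFE]; ring, hcop, fun s z h0 => ?_⟩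
      rw [Polynomial.evalEval_mul] at h0
      rcases mul_eq_zero.mp h0 with h0 | h0
      · exact ⟨P, hPm, hPi, dvd_mul_right _ _, hPh, h0⟩
      · obtain ⟨P', h1, h2, h3, h4, h5⟩ := hE s z h0
        exact ⟨P', h1, h2, h3.mul_left _, h4, h5⟩
    · refine ⟨P * F', E, hPm.mul hF', by rw [hFE]; ring, ?_, fun s z h0 => ?_⟩
      · rw [Polynomial.map_mul]
        refine IsCoprime.mul_left ?_ hcop
        refine (Irreducible.coprime_iff_not_dvd
          ((hPm.irreducible_iff_irreducible_map_fraction_map).mp hPi)).mpr fun hd => hPh ?_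
        exact (Polynomial.map_dvd_map _ (IsFractionRing.injective _ _) hPm).mp hd
      · obtain ⟨P', h1, h2, h3, h4, h5⟩ := hE s z h0
        exact ⟨P', h1, h2, h3.mul_left _, h4, h5⟩

/-- The values over `s` of the roots of `F`, with multiplicity. -/
noncomputable def fib (F : Polynomial (Polynomial ℂ)) (s : ℂ) : Multiset ℂ :=
  (F.map (Polynomial.evalRingHom s)).roots

theorem eval_map_evalRingHom (P : Polynomial (Polynomial ℂ)) (s z : ℂ) :
    (P.map (Polynomial.evalRingHom s)).eval z = P.evalEval s z := by
  rw [Polynomial.eval_map]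
  rw [Polynomial.evalEval, ← Polynomial.coe_evalRingHom, Polynomial.eval,
    Polynomial.hom_eval₂]
  simp

theorem mem_fib {F : Polynomial (Polynomial ℂ)} (hF : F.Monic) (s z : ℂ) :
    z ∈ fib F s ↔ F.evalEval s z = 0 := by
  rw [fib, Polynomial.mem_roots (hF.map _).ne_zero, Polynomial.IsRoot, eval_map_evalRingHom]

theorem card_fib_le {F : Polynomial (Polynomial ℂ)} (s : ℂ) :
    (fib F s).card ≤ F.natDegree :=
  (Polynomial.card_roots' _).trans Polynomial.natDegree_map_le

/-- The resultant with a monic polynomial is the norm: its value at `s` is the product of the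
values of `P` at the points of the fibre over `s`. -/
theorem eval_resultant {F : Polynomial (Polynomial ℂ)} (hF : F.Monic)
    (P : Polynomial (Polynomial ℂ)) (s : ℂ) :
    (Polynomial.resultant F P).eval s = ((fib F s).map fun z => P.evalEval s z).prod := by
  rw [← Polynomial.coe_evalRingHom, ← Polynomial.resultant_map_map]
  have h1 : F.natDegree = (F.map (Polynomial.evalRingHom s)).natDegree := (hF.natDegree_map _).symm
  rw [h1, Polynomial.resultant_eq_prod_eval _ _ _ Polynomial.natDegree_map_le
    (IsAlgClosed.splits _), (hF.map _).leadingCoeff, one_pow, one_mul]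
  simp only [eval_map_evalRingHom, fib]

theorem resultant_ne_zero_of_coprime {F h : Polynomial (Polynomial ℂ)}
    (hc : IsCoprime (F.map (algebraMap (Polynomial ℂ) (FractionRing (Polynomial ℂ))))
        (h.map (algebraMap (Polynomial ℂ) (FractionRing (Polynomial ℂ))))) :
    Polynomial.resultant F h ≠ 0 := by
  have h1 := Polynomial.resultant_ne_zero _ _ hc
  have hinj := IsFractionRing.injective (Polynomial ℂ) (FractionRing (Polynomial ℂ))
  rw [Polynomial.natDegree_map_eq_of_injective hinj,
    Polynomial.natDegree_map_eq_of_injective hinj, Polynomial.resultant_map_map] at h1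
  exact fun h0 => h1 (by rw [h0, map_zero])

/-- A complex polynomial that is `O(|s| ^ N)` has degree at most `N`. -/
theorem natDegree_le_of_growth (N : ℕ) : ∀ (p : Polynomial ℂ) (K : ℝ),
    (∀ s : ℂ, 1 ≤ ‖s‖ → ‖p.eval s‖ ≤ K * ‖s‖ ^ N) → p.natDegree ≤ N := by
  induction N with
  | zero =>
    intro p K h
    by_contra hp
    have hdeg : 0 < p.degree := Polynomial.natDegree_pos_iff_degree_pos.mp (by omega)
    have h1 : Filter.Tendsto (fun n : ℕ => ‖((n : ℂ))‖) Filter.atTop Filter.atTop := by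
      simpa using tendsto_natCast_atTop_atTop (R := ℝ)
    have h2 := Polynomial.tendsto_norm_atTop p hdeg h1
    obtain ⟨n, hn1, hn2⟩ := ((h2.eventually_gt_atTop K).and (Filter.eventually_ge_atTop 1)).exists
    have := h (n : ℂ) (by simpa using hn2)
    simp only [pow_zero, mul_one] at this
    linarith
  | succ N ih =>
    intro p K h
    have h1 := ih p.divX (K + ‖p.coeff 0‖) (by
      intro s hs
      have e : s * p.divX.eval s = p.eval s - p.coeff 0 := by
        conv_rhs => rw [← p.divX_mul_X_add]
        simp
        ring
      have h2 : ‖s‖ * ‖p.divX.eval s‖ ≤ ‖s‖ * ((K + ‖p.coeff 0‖) * ‖s‖ ^ N) := by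
        rw [← norm_mul, e]
        refine (norm_sub_le _ _).trans ?_
        have h3 := h s hs
        have h4 : 1 ≤ ‖s‖ ^ (N + 1) := one_le_pow₀ hs
        have h5 := norm_nonneg (p.coeff 0)
        rw [show ‖s‖ * ((K + ‖p.coeff 0‖) * ‖s‖ ^ N) =
          K * ‖s‖ ^ (N + 1) + ‖p.coeff 0‖ * ‖s‖ ^ (N + 1) by ring]
        nlinarith
      exact le_of_mul_le_mul_left h2 (by linarith))
    rw [Polynomial.natDegree_divX_eq_natDegree_tsub_one] at h1
    omega

/-! ### Affine charts -/

/-- Pullback of ternary polynomials along the affine chart `(s, z) ↦ a + s b + z q`; the outer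
polynomial variable is `z`. -/
noncomputable def chart (a b q : Fin 3 → ℂ) :
    MvPolynomial (Fin 3) ℂ →ₐ[ℂ] Polynomial (Polynomial ℂ) :=
  aeval fun i => Polynomial.C (Polynomial.C (a i) + Polynomial.C (b i) * Polynomial.X) +
    Polynomial.C (Polynomial.C (q i)) * Polynomial.X

/-- Evaluation of the pullback is evaluation at the point of the chart. -/
theorem evalEval_chart (a b q : Fin 3 → ℂ) (P : MvPolynomial (Fin 3) ℂ) (s z : ℂ) :
    (chart a b q P).evalEval s z = eval (a + s • b + z • q) P := by
  unfold chart
  induction P using MvPolynomial.induction_on with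
  | C c => simp [Polynomial.algebraMap_apply]
  | add p q hp hq => rw [map_add, Polynomial.evalEval_add, hp, hq, map_add]
  | mul_X p i hp =>
    rw [map_mul, Polynomial.evalEval_mul, hp, map_mul, aeval_X]
    congr 1
    simp only [Polynomial.evalEval_add, Polynomial.evalEval_mul, Polynomial.evalEval_C,
      Polynomial.evalEval_X, Polynomial.eval_add, Polynomial.eval_mul, Polynomial.eval_C,
      Polynomial.eval_X, eval_X, Pi.add_apply, Pi.smul_apply, smul_eq_mul]
    ring

theorem chart_monic {f : MvPolynomial (Fin 3) ℂ} {d : ℕ} (hf : f.IsHomogeneous d)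
    {a b q : Fin 3 → ℂ} (hq : eval q f = 1) :
    (chart a b q f).Monic ∧ (chart a b q f).natDegree ≤ d := by
  obtain ⟨h1, h2⟩ := aeval_line_natDegree_coeff hf
    (fun i => Polynomial.C (a i) + Polynomial.C (b i) * Polynomial.X)
    (fun i => Polynomial.C (q i))
  have h3 : aeval (fun i => Polynomial.C (q i)) f = Polynomial.C (eval q f) := by
    rw [aeval_def, eval, eval₂_eq', coe_eval₂Hom, eval₂_eq', map_sum]
    simp [Polynomial.algebraMap_eq]
  rw [h3, hq, map_one] at h2
  exact ⟨Polynomial.monic_of_natDegree_le_of_coeff_eq_one d h1 h2, h1⟩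

theorem chart_lin (a b q : Fin 3 → ℂ) (U : (Fin 3 → ℂ) →ₗ[ℂ] ℂ) :
    chart a b q (lin U) =
      Polynomial.C (Polynomial.C (U a) + Polynomial.C (U b) * Polynomial.X) +
      Polynomial.C (Polynomial.C (U q)) * Polynomial.X := by
  have hlin : ∀ v, U v = ∑ i, U (Pi.single i 1) * v i := by
    intro v
    rw [← eval_lin]
    simp [lin]
  rw [hlin a, hlin b, hlin q]
  simp only [lin, chart, map_mul, aeval_X, Fin.sum_univ_three, ← algebraMap_eq,
    AlgHom.commutes, Polynomial.algebraMap_apply, Polynomial.algebraMap_eq, map_add]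
  ring

/-- A common irreducible component `P` of the curve and its Hessian does not pass through a point
where the local form holds with `W` nonzero: `P` would divide a power of `U`, so the line `U = 0`
would lie on the curve, which `no_line` excludes. -/
theorem FlexData.evalEval_ne_zero {d : ℕ} (hd : 2 ≤ d) {f : MvPolynomial (Fin 3) ℂ}
    (hf : f.IsHomogeneous d)
    (hsm : ∀ x : Fin 3 → ℂ, x ≠ 0 → ∃ i : Fin 3, eval x (pderiv i f) ≠ 0)
    {a b q : Fin 3 → ℂ} (hi : LinearIndependent ℂ ![q, b])
    (ha : ∀ α β : ℂ, a ≠ α • q + β • b)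
    {U : (Fin 3 → ℂ) →ₗ[ℂ] ℂ} {g A W : MvPolynomial (Fin 3) ℂ} (hUq : U q ≠ 0)
    (hhess : g * hess f = f * A + lin U ^ (d - 2) * W) {s z : ℂ}
    (hW : eval (a + s • b + z • q) W ≠ 0) {P : Polynomial (Polynomial ℂ)}
    (hPm : P.Monic) (hPi : Irreducible P) (hPf : P ∣ chart a b q f)
    (hPh : P ∣ chart a b q (hess f)) : P.evalEval s z ≠ 0 := by
  intro h0
  have hPp : Prime P := hPi.prime
  have h1 : P ∣ chart a b q (lin U) ^ (d - 2) * chart a b q W := by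
    have h2 := congrArg (chart a b q) hhess
    simp only [map_mul, map_add, map_pow] at h2
    rw [eq_sub_iff_add_eq'.mpr h2.symm]
    exact dvd_sub (hPh.mul_left _) (hPf.mul_right _)
  rcases hPp.dvd_or_dvd h1 with h2 | h2
  swap
  · obtain ⟨V, hV⟩ := h2
    apply hW
    rw [← evalEval_chart, hV, Polynomial.evalEval_mul, h0, zero_mul]
  obtain ⟨V, hV⟩ := hPp.dvd_of_dvd_pow h2
  -- `P` has positive degree in `z`, so it is the linear polynomial `U` up to a constant
  have hline : ∀ s' z' : ℂ, U (a + s' • b + z' • q) = 0 →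
      eval (a + s' • b + z' • q) f = 0 := by
    intro s' z' h'
    have hu : (chart a b q (lin U)).natDegree ≤ 1 ∧
        (chart a b q (lin U)).coeff 1 = Polynomial.C (U q) := by
      rw [chart_lin]
      exact ⟨by compute_degree, by simp [Polynomial.coeff_C]⟩
    have hPd : P.natDegree ≠ 0 := by
      intro h3
      rw [hPm.natDegree_eq_zero] at h3
      exact hPi.not_isUnit (h3 ▸ isUnit_one)
    have hV0 : V ≠ 0 := by
      rintro rfl
      rw [mul_zero] at hV
      rw [hV] at hu
      exact hUq (by simpa using hu.2.symm)
    have hdeg : P.natDegree + V.natDegree ≤ 1 := by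
      rw [← hPm.natDegree_mul' hV0, ← hV]
      exact hu.1
    have hVd : V.natDegree = 0 := by omega
    have hPd1 : P.natDegree = 1 := by omega
    obtain ⟨c, rfl⟩ : ∃ c, V = Polynomial.C c :=
      ⟨_, Polynomial.eq_C_of_natDegree_eq_zero hVd⟩
    have hc : c = Polynomial.C (U q) := by
      rw [← hu.2, hV, Polynomial.coeff_mul_C, ← hPd1, hPm.coeff_natDegree, one_mul]
    have h4 := congrArg (Polynomial.evalEval s' z') hV
    rw [evalEval_chart, eval_lin, h', hc, Polynomial.evalEval_mul] at h4
    have h5 : P.evalEval s' z' = 0 := by simpa [hUq] using h4.symm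
    obtain ⟨Q, hQ⟩ := hPf
    rw [← evalEval_chart, hQ, Polynomial.evalEval_mul, h5, zero_mul]
  set v₀ := a + (-U a / U q) • q with hv₀
  set b' := b + (-U b / U q) • q with hb'
  have hUv : U v₀ = 0 := by
    simp [hv₀, div_mul_cancel₀ _ hUq]
  have hUb : U b' = 0 := by
    simp [hb', div_mul_cancel₀ _ hUq]
  have hli : LinearIndependent ℂ ![v₀, b'] := by
    rw [LinearIndependent.pair_iff]
    intro α β h
    have := indep_three hi ha α β (α * (-U a / U q) + β * (-U b / U q)) (by
      rw [← h, hv₀, hb']; module)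
    exact ⟨this.1, this.2.1⟩
  have haff : ∀ t : ℂ, eval (v₀ + t • b') f = 0 := by
    intro t
    have e : v₀ + t • b' = a + t • b + (-U a / U q + t * (-U b / U q)) • q := by
      rw [hv₀, hb']; module
    rw [e]
    apply hline
    rw [← e]
    simp [hUv, hUb]
  clear_value v₀ b'
  obtain ⟨α, β, h⟩ := no_line hd hf hsm hli
  rcases eq_or_ne α 0 with rfl | hα
  · have h0 : lineRes v₀ b' f = 0 := by
      refine Polynomial.funext fun t => ?_
      rw [eval_lineRes, haff, Polynomial.eval_zero]
    have h1 : (lineRes v₀ b' f).coeff d = eval b' f := (aeval_line_natDegree_coeff hf v₀ b').2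
    rw [zero_smul, zero_add, eval_smul_of_hom hf, ← h1, h0] at h
    simp at h
  · have e : α • v₀ + β • b' = α • (v₀ + (β / α) • b') := by
      rw [smul_add, smul_smul, mul_div_cancel₀ _ hα]
    rw [e, eval_smul_of_hom hf, haff, mul_zero] at h
    exact h rfl

/-- The norm of the Hessian from (a suitable part of) the curve to the `s`-line vanishes to order
at least `d - 2` below each total inflection point. -/
theorem FlexData.pow_dvd_resultant {d : ℕ} (hd : 2 ≤ d) {f : MvPolynomial (Fin 3) ℂ}
    (hf : f.IsHomogeneous d)
    (hsm : ∀ x : Fin 3 → ℂ, x ≠ 0 → ∃ i : Fin 3, eval x (pderiv i f) ≠ 0)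
    {a b q : Fin 3 → ℂ} (hq : eval q f = 1) (hi : LinearIndependent ℂ ![q, b])
    (ha : ∀ α β : ℂ, a ≠ α • q + β • b)
    {F' E : Polynomial (Polynomial ℂ)} (hF' : F'.Monic) (hFE : chart a b q f = F' * E)
    (hE : ∀ s z, E.evalEval s z = 0 → ∃ P, P.Monic ∧ Irreducible P ∧ P ∣ chart a b q f ∧
      P ∣ chart a b q (hess f) ∧ P.evalEval s z = 0)
    {s z : ℂ} {w : Fin 3 → ℂ} (h : FlexData d f (a + s • b + z • q) w) :
    (Polynomial.X - Polynomial.C s) ^ (d - 2) ∣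
      Polynomial.resultant F' (chart a b q (hess f)) := by
  obtain ⟨U, Λ, c, g, A, W, hUq, hUp, hc, hg, hfg, hhess, hW⟩ :=
    h.exists_localForm hd hf hsm (q := q) (by rw [hq]; exact one_ne_zero)
  have hE0 : E.evalEval s z ≠ 0 := by
    intro h0
    obtain ⟨P, h1, h2, h3, h4, h5⟩ := hE s z h0
    exact FlexData.evalEval_ne_zero hd hf hsm hi ha hUq hhess hW h1 h2 h3 h4 h5
  have hF0 : z ∈ fib F' s := by
    rw [mem_fib hF']
    have h1 := h.eval_left hd
    rw [← evalEval_chart, hFE, Polynomial.evalEval_mul] at h1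
    exact (mul_eq_zero.mp h1).resolve_right hE0
  have hf0 : ∀ t y, y ∈ fib F' t → eval (a + t • b + y • q) f = 0 := by
    intro t y hy
    rw [mem_fib hF'] at hy
    rw [← evalEval_chart, hFE, Polynomial.evalEval_mul, hy, zero_mul]
  -- taking norms in the local form removes the multiple of `f`
  have key : Polynomial.resultant F' (chart a b q g) *
      Polynomial.resultant F' (chart a b q (hess f)) =
      Polynomial.resultant F' (chart a b q (lin U)) ^ (d - 2) *
        Polynomial.resultant F' (chart a b q W) := by
    refine Polynomial.funext fun t => ?_
    simp only [Polynomial.eval_mul, Polynomial.eval_pow, eval_resultant hF', evalEval_chart]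
    rw [← Multiset.prod_map_mul, ← Multiset.prod_map_pow, ← Multiset.prod_map_mul]
    refine congrArg Multiset.prod (Multiset.map_congr rfl fun y hy => ?_)
    have := congrArg (eval (a + t • b + y • q)) hhess
    simpa [hf0 t y hy] using this
  have hu : Polynomial.X - Polynomial.C s ∣ Polynomial.resultant F' (chart a b q (lin U)) := by
    rw [Polynomial.dvd_iff_isRoot, Polynomial.IsRoot, eval_resultant hF']
    refine Multiset.prod_eq_zero (Multiset.mem_map.mpr ⟨z, hF0, ?_⟩)
    rw [evalEval_chart, eval_lin, hUp]
  -- a zero of `g` on the curve over `s` would lie on `U = 0`, hence be the inflection point itself,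
  -- because `U q ≠ 0`; but `g` is `1` there
  have hng : ¬ Polynomial.X - Polynomial.C s ∣ Polynomial.resultant F' (chart a b q g) := by
    rw [Polynomial.dvd_iff_isRoot, Polynomial.IsRoot, eval_resultant hF']
    intro h0
    obtain ⟨y, hy, hy0⟩ := Multiset.mem_map.mp (Multiset.prod_eq_zero_iff.mp h0)
    rw [evalEval_chart] at hy0
    have h1 := hf0 s y hy
    rw [hfg] at h1
    simp only [map_add, map_mul, map_pow, eval_C, eval_lin, hy0, mul_zero, add_zero,
      mul_eq_zero, hc, false_or] at h1
    have h2 := eq_zero_of_pow_eq_zero h1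
    have hyz : y = z := by
      have h3 : (y - z) * U q = 0 := by
        have : U (a + s • b + y • q) - U (a + s • b + z • q) = (y - z) * U q := by
          simp; ring
        rw [← this]
        simp only [map_smul, smul_eq_mul] at h2
        rw [hUp]
        simp [h2]
      rcases mul_eq_zero.mp h3 with h3 | h3
      · exact sub_eq_zero.mp h3
      · exact absurd h3 hUq
    rw [hyz, hg] at hy0
    exact one_ne_zero hy0
  refine (Polynomial.prime_X_sub_C s).pow_dvd_of_dvd_mul_left _ hng ?_
  rw [key]
  exact (pow_dvd_pow_of_dvd hu _).mul_right _

/-! ### Choice of coordinates and the bound -/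

theorem hess_isHomogeneous {d : ℕ} {f : MvPolynomial (Fin 3) ℂ} (hf : f.IsHomogeneous d) :
    (hess f).IsHomogeneous (3 * (d - 2)) := by
  have h : ∀ i j, (pderiv i (pderiv j f)).IsHomogeneous (d - 2) := fun i j =>
    (hf.pderiv (i := j)).pderiv (i := i)
  have h3 : ∀ i j i' j' i'' j'', (pderiv i (pderiv j f) * pderiv i' (pderiv j' f) *
      pderiv i'' (pderiv j'' f)).IsHomogeneous (3 * (d - 2)) := by
    intro i j i' j' i'' j''
    have := ((h i j).mul (h i' j')).mul (h i'' j'')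
    rwa [show d - 2 + (d - 2) + (d - 2) = 3 * (d - 2) by ring] at this
  rw [hess, Matrix.det_fin_three]
  simp only [Matrix.of_apply]
  exact (((((h3 _ _ _ _ _ _).sub (h3 _ _ _ _ _ _)).sub (h3 _ _ _ _ _ _)).add
    (h3 _ _ _ _ _ _)).add (h3 _ _ _ _ _ _)).sub (h3 _ _ _ _ _ _)

theorem norm_eval_le {h : MvPolynomial (Fin 3) ℂ} {n : ℕ} (hh : h.IsHomogeneous n) :
    ∃ K : ℝ, 0 ≤ K ∧ ∀ v : Fin 3 → ℂ, ‖eval v h‖ ≤ K * ‖v‖ ^ n := by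
  refine ⟨∑ m ∈ h.support, ‖h.coeff m‖, Finset.sum_nonneg fun _ _ => norm_nonneg _, fun v => ?_⟩
  rw [eval_eq', Finset.sum_mul]
  refine (norm_sum_le _ _).trans (Finset.sum_le_sum fun m hm => ?_)
  have hm : m 0 + m 1 + m 2 = n := by
    have := hh (mem_support_iff.mp hm)
    simpa [Finsupp.weight_apply, Finsupp.sum_fintype, Fin.sum_univ_three] using this
  rw [norm_mul, norm_prod, Fin.prod_univ_three, ← hm, pow_add, pow_add]
  simp only [norm_pow]
  have := norm_le_pi_norm v
  gcongr <;> exact this _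

/-- Points of the curve cannot approach a point `q` off the curve, so in the chart centred at `q`
the height of a point of the curve grows at most linearly. -/
theorem norm_root_le {f : MvPolynomial (Fin 3) ℂ} {d : ℕ} (hf : f.IsHomogeneous d)
    (a b : Fin 3 → ℂ) {q : Fin 3 → ℂ} (hq : eval q f ≠ 0) :
    ∃ K : ℝ, 0 ≤ K ∧ ∀ s z : ℂ, 1 ≤ ‖s‖ → eval (a + s • b + z • q) f = 0 → ‖z‖ ≤ K * ‖s‖ := by
  have hcont : Continuous fun v : Fin 3 → ℂ => eval v f := MvPolynomial.continuous_eval f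
  obtain ⟨δ, hδ, hball⟩ := Metric.eventually_nhds_iff.mp (hcont.continuousAt.eventually_ne hq)
  refine ⟨(‖a‖ + ‖b‖) / δ, by positivity, fun s z hs h => ?_⟩
  rcases eq_or_ne z 0 with rfl | hz
  · rw [norm_zero]; positivity
  have hz' : 0 < ‖z‖ := norm_pos_iff.mpr hz
  have h1 : eval (q + z⁻¹ • (a + s • b)) f = 0 := by
    have : q + z⁻¹ • (a + s • b) = z⁻¹ • (a + s • b + z • q) := by
      rw [smul_add z⁻¹ (a + s • b), smul_smul, inv_mul_cancel₀ hz, one_smul, add_comm]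
    rw [this, eval_smul_of_hom hf, h, mul_zero]
  have h2 : δ ≤ ‖z‖⁻¹ * ‖a + s • b‖ := by
    by_contra! h2
    refine hball (y := q + z⁻¹ • (a + s • b)) ?_ h1
    rw [dist_eq_norm, add_sub_cancel_left, norm_smul, norm_inv]
    exact h2
  have h3 : ‖a + s • b‖ ≤ (‖a‖ + ‖b‖) * ‖s‖ := by
    refine (norm_add_le _ _).trans ?_
    rw [norm_smul]
    nlinarith [norm_nonneg a, norm_nonneg b]
  rw [div_mul_eq_mul_div, le_div_iff₀ hδ]
  calc ‖z‖ * δ ≤ ‖z‖ * (‖z‖⁻¹ * ‖a + s • b‖) := by gcongr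
    _ = ‖a + s • b‖ := by field_simp
    _ ≤ _ := h3

theorem norm_multiset_prod_map_le (m : Multiset ℂ) (g : ℂ → ℂ) {M : ℝ} (hM : 0 ≤ M)
    (h : ∀ z ∈ m, ‖g z‖ ≤ M) : ‖(m.map g).prod‖ ≤ M ^ m.card := by
  induction m using Multiset.induction_on with
  | empty => simp
  | cons z m ih =>
    rw [Multiset.map_cons, Multiset.prod_cons, norm_mul, Multiset.card_cons, pow_succ']
    gcongr
    · exact h z (Multiset.mem_cons_self _ _)
    · exact ih fun y hy => h y (Multiset.mem_cons_of_mem hy)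

/-- A Bézout-type bound on the degree of the norm, obtained from its growth. -/
theorem natDegree_resultant_le {f h : MvPolynomial (Fin 3) ℂ} {d n : ℕ} (hf : f.IsHomogeneous d)
    (hh : h.IsHomogeneous n) {a b q : Fin 3 → ℂ} (hq : eval q f = 1)
    {F' E : Polynomial (Polynomial ℂ)} (hF' : F'.Monic) (hFE : chart a b q f = F' * E) :
    (Polynomial.resultant F' (chart a b q h)).natDegree ≤ n * d := by
  obtain ⟨K₁, hK₁, h1⟩ := norm_root_le hf a b (q := q) (by rw [hq]; exact one_ne_zero)
  obtain ⟨K₂, hK₂, h2⟩ := norm_eval_le hh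
  have hcard : ∀ s, (fib F' s).card ≤ d := by
    intro s
    refine (card_fib_le s).trans (le_trans ?_ (chart_monic hf (a := a) (b := b) hq).2)
    exact Polynomial.natDegree_le_of_dvd ⟨E, hFE⟩ (chart_monic hf hq).1.ne_zero
  set B := ‖a‖ + ‖b‖ + K₁ * ‖q‖ with hB
  have hB0 : 0 ≤ B := by positivity
  refine natDegree_le_of_growth (n * d) _ ((K₂ * B ^ n + 1) ^ d) fun s hs => ?_
  have hs0 : 0 ≤ ‖s‖ := norm_nonneg _
  rw [eval_resultant hF', pow_mul, ← mul_pow]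
  have hM : 1 ≤ (K₂ * B ^ n + 1) * ‖s‖ ^ n := by
    have h3 : 1 ≤ ‖s‖ ^ n := one_le_pow₀ hs
    have h4 : 0 ≤ K₂ * B ^ n := by positivity
    nlinarith
  refine (norm_multiset_prod_map_le _ _ (zero_le_one.trans hM) fun z hz => ?_).trans
    (pow_le_pow_right₀ hM (hcard s))
  rw [mem_fib hF'] at hz
  have hfz : eval (a + s • b + z • q) f = 0 := by
    rw [← evalEval_chart, hFE, Polynomial.evalEval_mul, hz, zero_mul]
  have hv : ‖a + s • b + z • q‖ ≤ B * ‖s‖ := by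
    have h3 := norm_add₃_le (a := a) (b := s • b) (c := z • q)
    rw [norm_smul, norm_smul] at h3
    have h4 := mul_le_mul_of_nonneg_right (h1 s z hs hfz) (norm_nonneg q)
    rw [hB]
    nlinarith [norm_nonneg a]
  rw [evalEval_chart]
  calc _ ≤ K₂ * ‖a + s • b + z • q‖ ^ n := h2 _
    _ ≤ K₂ * (B * ‖s‖) ^ n := by gcongr
    _ = K₂ * B ^ n * ‖s‖ ^ n := by rw [mul_pow, mul_assoc]
    _ ≤ _ := by gcongr; linarith

/-- A centre of projection off the curve and off all lines joining the given points. -/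
theorem exists_center {ι : Type*} [Finite ι] {f : MvPolynomial (Fin 3) ℂ} {d : ℕ} (hd : 2 ≤ d)
    (hf : f.IsHomogeneous d) (hf0 : f ≠ 0) (x : ι → Fin 3 → ℂ) :
    ∃ q, eval q f = 1 ∧
      ∀ i j, ∃ e : (Fin 3 → ℂ) →ₗ[ℂ] ℂ, e (x i) = 0 ∧ e (x j) = 0 ∧ e q ≠ 0 := by
  have := Fintype.ofFinite ι
  have hex : ∀ r : ι × ι, ∃ e : (Fin 3 → ℂ) →ₗ[ℂ] ℂ, e (x r.1) = 0 ∧ e (x r.2) = 0 ∧ e ≠ 0 := by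
    intro r
    obtain ⟨n, hn⟩ := exists_not_comb (x r.1) (x r.2)
    have hn' : n ∉ Submodule.span ℂ {x r.1, x r.2} := by
      intro h
      obtain ⟨α, β, h⟩ := Submodule.mem_span_pair.mp h
      exact hn α β h.symm
    obtain ⟨e, h1, h2⟩ := Submodule.exists_le_ker_of_notMem hn'
    refine ⟨e, h2 (Submodule.subset_span (by simp)), h2 (Submodule.subset_span (by simp)), ?_⟩
    rintro rfl
    exact h1 rfl
  choose e he1 he2 he0 using hex
  have hlin : ∀ r, lin (e r) ≠ 0 := by
    intro r h
    refine he0 r (LinearMap.ext fun v => ?_)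
    rw [← eval_lin, h, map_zero, LinearMap.zero_apply]
  have hprod : f * ∏ r, lin (e r) ≠ 0 :=
    mul_ne_zero hf0 (Finset.prod_ne_zero_iff.mpr fun r _ => hlin r)
  obtain ⟨q, hq⟩ : ∃ q, eval q (f * ∏ r, lin (e r)) ≠ 0 := by
    by_contra! h
    exact hprod (MvPolynomial.funext fun v => by rw [h v, map_zero])
  rw [map_mul, map_prod, mul_ne_zero_iff, Finset.prod_ne_zero_iff] at hq
  obtain ⟨c, hc⟩ := IsAlgClosed.exists_pow_nat_eq (eval q f)⁻¹ (show 0 < d by omega)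
  have hc0 : c ≠ 0 := by
    rintro rfl
    rw [zero_pow (by omega)] at hc
    exact inv_ne_zero hq.1 hc.symm
  refine ⟨c • q, by rw [eval_smul_of_hom hf, hc, inv_mul_cancel₀ hq.1], fun i j =>
    ⟨e (i, j), he1 _, he2 _, ?_⟩⟩
  have := hq.2 (i, j) (Finset.mem_univ _)
  rw [eval_lin] at this
  simp [hc0, this]

/-- Coordinates in which finitely many given points of `ℙ²` lie in the affine chart and have
distinct first coordinates. -/
theorem exists_good_chart {ι : Type*} [Finite ι] [Nonempty ι] {f : MvPolynomial (Fin 3) ℂ} {d : ℕ}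
    (hd : 2 ≤ d) (hf : f.IsHomogeneous d) (hf0 : f ≠ 0) (x : ι → Fin 3 → ℂ)
    (hx0 : ∀ i, x i ≠ 0) (hx : Function.Injective fun i => (ℂ ∙ x i)) :
    ∃ (a b q : Fin 3 → ℂ) (c s z : ι → ℂ), eval q f = 1 ∧ LinearIndependent ℂ ![q, b] ∧
      (∀ α β : ℂ, a ≠ α • q + β • b) ∧ (∀ i, c i ≠ 0) ∧
      (∀ i, c i • x i = a + s i • b + z i • q) ∧ Function.Injective s := by
  obtain ⟨q, hq, he⟩ := exists_center hd hf hf0 x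
  have hq0 : q ≠ 0 := by
    rintro rfl
    have := eval_smul_of_hom hf 0 0
    rw [zero_smul, hq, zero_pow (by omega)] at this
    simp at this
  let K : Submodule ℂ (Module.Dual ℂ (Fin 3 → ℂ)) := LinearMap.ker (Module.Dual.eval ℂ _ q)
  obtain ⟨ξ, hξq, hξ⟩ : ∃ ξ : Module.Dual ℂ (Fin 3 → ℂ), ξ q = 0 ∧ ∀ i, ξ (x i) ≠ 0 := by
    obtain ⟨ξ, h1, h2⟩ := Module.Dual.exists_forall_mem_ne_zero_of_forall_exists K
      (fun i => Module.Dual.eval ℂ (Fin 3 → ℂ) (x i)) (fun i => by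
        obtain ⟨e, h1, -, h2⟩ := he i i
        have hli : LinearIndependent ℂ ![q, x i] := by
          refine (LinearIndependent.pair_iff' hq0).mpr fun c hc => ?_
          rw [← hc, map_smul, smul_eq_mul, mul_eq_zero] at h1
          have : c = 0 := h1.resolve_right h2
          rw [this, zero_smul] at hc
          exact hx0 i hc.symm
        obtain ⟨γ, h3, h4⟩ := exists_dual_pair hli
        exact ⟨γ, h3, by simp [h4]⟩)
    exact ⟨ξ, h1, h2⟩
  obtain ⟨b, hb, hli⟩ := exists_indep_in_ker (L := ξ) hq0
  obtain ⟨i₀⟩ := ‹Nonempty ι›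
  set a := (ξ (x i₀))⁻¹ • x i₀ with ha
  have hξa : ξ a = 1 := by simp [ha, hξ i₀]
  have hξ0 : ξ ≠ 0 := by
    rintro rfl
    exact hξ i₀ rfl
  have hdec : ∀ i, ∃ s z : ℂ, (ξ (x i))⁻¹ • x i = a + s • b + z • q := by
    intro i
    obtain ⟨α, β, h⟩ := exists_comb_of_ker hξ0 hξq hb hli (v := (ξ (x i))⁻¹ • x i - a)
      (by simp [hξa, hξ i])
    exact ⟨β, α, by rw [sub_eq_iff_eq_add.mp h]; module⟩
  choose s z hsz using hdec
  refine ⟨a, b, q, fun i => (ξ (x i))⁻¹, s, z, hq, hli, fun α β h => ?_,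
    fun i => inv_ne_zero (hξ i), hsz, fun i j hij => ?_⟩
  · rw [h] at hξa
    simp [hξq, hb] at hξa
  · obtain ⟨e, h1, h2, h3⟩ := he i j
    have hz : z i = z j := by
      have h4 : e ((ξ (x i))⁻¹ • x i) - e ((ξ (x j))⁻¹ • x j) = (z i - z j) * e q := by
        rw [hsz, hsz, hij]
        simp
        ring
      rw [map_smul, map_smul, h1, h2, smul_zero, smul_zero, sub_zero] at h4
      rcases mul_eq_zero.mp h4.symm with h | h
      · exact sub_eq_zero.mp h
      · exact absurd h h3
    have h4 : (ξ (x i))⁻¹ • x i = (ξ (x j))⁻¹ • x j := by rw [hsz, hsz, hij, hz]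
    apply hx
    have h5 := Submodule.span_singleton_smul_eq (IsUnit.mk0 _ (inv_ne_zero (hξ i))) (x i)
    have h6 := Submodule.span_singleton_smul_eq (IsUnit.mk0 _ (inv_ne_zero (hξ j))) (x j)
    change (ℂ ∙ x i) = ℂ ∙ x j
    rw [← h5, ← h6, h4]

/-- A smooth plane curve of degree `d ≥ 3` has at most `3 d` total inflection points. -/
theorem numTotalInflections_le {d : ℕ} (hd : 3 ≤ d) {f : MvPolynomial (Fin 3) ℂ}
    (hf : f.IsHomogeneous d)
    (hsm : ∀ x : Fin 3 → ℂ, x ≠ 0 → ∃ i : Fin 3, eval x (pderiv i f) ≠ 0) :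
    numTotalInflections d f ≤ 3 * d := by
  have hd2 : 2 ≤ d := by omega
  unfold numTotalInflections
  set ι := {ℓ : Submodule ℂ (Fin 3 → ℂ) //
    Module.finrank ℂ ℓ = 1 ∧ ∃ x ∈ ℓ, IsTotalInflection d f x} with hι
  -- in the infinite case `Nat.card` is `0`, so nothing has to be shown
  rcases finite_or_infinite ι with hfin | hinf
  swap
  · rw [Nat.card_eq_zero_of_infinite]; exact Nat.zero_le _
  rcases isEmpty_or_nonempty ι with hem | hne
  · rw [Nat.card_of_isEmpty]; exact Nat.zero_le _
  have := Fintype.ofFinite ι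
  have hex : ∀ ℓ : ι, ∃ x w, x ∈ ℓ.1 ∧ FlexData d f x w := by
    rintro ⟨ℓ, h1, x, hx, hT⟩
    obtain ⟨w, hw⟩ := exists_flexData hd2 hf hsm hT
    exact ⟨x, w, hx, hw⟩
  choose x w hxℓ hflex using hex
  have hinj : Function.Injective fun ℓ => (ℂ ∙ x ℓ) := by
    intro ℓ ℓ' h
    apply Subtype.ext
    rw [span_eq_of_mem ℓ.2.1 (hxℓ ℓ) (hflex ℓ).ne_zero,
      span_eq_of_mem ℓ'.2.1 (hxℓ ℓ') (hflex ℓ').ne_zero]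
    exact h
  obtain ⟨a, b, q, c, s, z, hq, hli, ha, hc, hsz, hs⟩ := exists_good_chart hd2 hf
    (ne_zero_of_smooth hsm) x (fun ℓ => (hflex ℓ).ne_zero) hinj
  obtain ⟨F', E, hF', hFE, hcop, hE⟩ := exists_split (chart a b q f) (chart a b q (hess f))
    (chart_monic hf hq).1
  set N := Polynomial.resultant F' (chart a b q (hess f)) with hN
  have hN0 : N ≠ 0 := resultant_ne_zero_of_coprime hcop
  have hdvd : ∏ ℓ : ι, (Polynomial.X - Polynomial.C (s ℓ)) ^ (d - 2) ∣ N := by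
    refine Finset.prod_dvd_of_coprime (fun ℓ _ ℓ' _ h => ?_) fun ℓ _ => ?_
    · exact (Polynomial.pairwise_coprime_X_sub_C hs h).pow
    · have h1 := (hflex ℓ).smul (hc ℓ)
      rw [hsz ℓ] at h1
      exact h1.pow_dvd_resultant hd2 hf hsm hq hli ha hF' hFE hE
  have h1 := Polynomial.natDegree_le_of_dvd hdvd hN0
  have h2 : (∏ ℓ : ι, (Polynomial.X - Polynomial.C (s ℓ)) ^ (d - 2)).natDegree =
      Nat.card ι * (d - 2) := by
    rw [Polynomial.natDegree_prod_of_monic _ _ fun ℓ _ => (Polynomial.monic_X_sub_C _).pow _]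
    simp [Polynomial.natDegree_pow]
  have h3 := natDegree_resultant_le hf (hess_isHomogeneous hf) hq hF' hFE
  rw [h2] at h1
  have h4 : Nat.card ι * (d - 2) ≤ 3 * d * (d - 2) :=
    (h1.trans h3).trans (le_of_eq (by ring))
  exact Nat.le_of_mul_le_mul_right h4 (by omega)

/-- If `C : f = 0` is a smooth plane curve of degree `d ≥ 2` with `β` total inflection
points, then the surface `t^d - f(x,y,z) = 0` in ℙ³ contains exactly `β·d` lines; in
particular it contains at most `3d²` lines. -/
theorem card_lines_coverPoly (d : ℕ) (hd : 2 ≤ d)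
    (f : MvPolynomial (Fin 3) ℂ) (hf : f.IsHomogeneous d)
    (hsm : ∀ x : Fin 3 → ℂ, x ≠ 0 → ∃ i : Fin 3, eval x (pderiv i f) ≠ 0) :
    Nat.card {W : Submodule ℂ (Fin 4 → ℂ) // IsLine W ∧ LiesOn (coverPoly d f) W} =
      numTotalInflections d f * d ∧
    Nat.card {W : Submodule ℂ (Fin 4 → ℂ) // IsLine W ∧ LiesOn (coverPoly d f) W} ≤
      3 * d ^ 2 := by
  have h := card_lines_eq hd hf hsm
  refine ⟨h, ?_⟩
  rw [h]
  rcases hd.eq_or_lt with rfl | hd3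
  · rw [numTotalInflections_conic hf hsm, zero_mul]
    exact Nat.zero_le _
  · calc numTotalInflections d f * d ≤ 3 * d * d :=
          Nat.mul_le_mul_right _ (numTotalInflections_le hd3 hf hsm)
      _ = 3 * d ^ 2 := by ring
end
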